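/- arXiv:1601.05360 — 2 statements merged into one kernel-verified Lean document; each statement's English description precedes it below -/
import Mathlib

section
/- Every function in GPVAL is real-analytic: if I ⊆ ℝ^d is open and connected and f : I → ℝ^e belongs to GPVAL, then each component of f is analytic at every point of I. -/
noncomputable section

/-- The continuous linear map `ℝ^d → ℝ^n` associated to an `n × d` real matrix. -/
def matLin {n d : ℕ} (M : Matrix (Fin n) (Fin d) ℝ) : (Fin d → ℝ) →L[ℝ] (Fin n → ℝ) :=
  LinearMap.toContinuousLinearMap (Matrix.toLin' M)

/-- The class `GPVAL` of polynomially bounded generable functions on `I`. -/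
def GPVAL {d e : ℕ} (I : Set (Fin d → ℝ)) (f : (Fin d → ℝ) → (Fin e → ℝ)) : Prop :=
  ∃ (sp : Polynomial ℝ) (n : ℕ) (hn : e ≤ n)
    (p : Matrix (Fin n) (Fin d) (MvPolynomial (Fin n) ℝ))
    (x₀ : Fin d → ℝ) (y₀ : Fin n → ℝ) (y : (Fin d → ℝ) → (Fin n → ℝ)),
    (∀ a : ℝ, 0 ≤ a → 0 ≤ sp.eval a) ∧
    x₀ ∈ I ∧ y x₀ = y₀ ∧
    (∀ x ∈ I, HasFDerivAt y (matLin (fun i j => MvPolynomial.eval (y x) (p i j))) x) ∧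
    (∀ x ∈ I, ∀ i : Fin e, f x i = y x (Fin.castLE hn i)) ∧
    (∀ x ∈ I, ‖y x‖ ≤ sp.eval ‖x‖)

open MvPolynomial in
/-- Quantitative majorant predicate: `q` has degree at most `m` and weighted `ℓ¹` norm at most `A`. -/
inductive Maj {n : ℕ} (R : ℝ) : ℕ → ℝ → MvPolynomial (Fin n) ℝ → Prop
  | const (m : ℕ) (A c : ℝ) (h : |c| ≤ A) : Maj R m A (C c)
  | add (m : ℕ) (A B : ℝ) (q r : MvPolynomial (Fin n) ℝ) (hq : Maj R m A q) (hr : Maj R m B r) :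
      Maj R m (A + B) (q + r)
  | mulX (m : ℕ) (A : ℝ) (q : MvPolynomial (Fin n) ℝ) (i : Fin n) (hq : Maj R m A q) :
      Maj R (m + 1) (R * A) (q * X i)
  | weak (m m' : ℕ) (A A' : ℝ) (q : MvPolynomial (Fin n) ℝ) (hq : Maj R m A q) (hm : m ≤ m')
      (hA : A ≤ A') : Maj R m' A' q

namespace Maj
open MvPolynomial

variable {n : ℕ} {R : ℝ}

theorem nonneg (hR : 1 ≤ R) {m : ℕ} {A : ℝ} {q : MvPolynomial (Fin n) ℝ} (h : Maj R m A q) :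
    0 ≤ A := by
  induction h with
  | const m A c h => exact (abs_nonneg c).trans h
  | add m A B q r hq hr ihq ihr => linarith
  | mulX m A q i hq ih => positivity
  | weak m m' A A' q hq hm hA ih => linarith

theorem eval_le (hR : 1 ≤ R) {m : ℕ} {A : ℝ} {q : MvPolynomial (Fin n) ℝ} (h : Maj R m A q)
    (z : Fin n → ℝ) (hz : ∀ i, |z i| ≤ R) : |eval z q| ≤ A := by
  induction h with
  | const m A c h => simpa using h
  | add m A B q r hq hr ihq ihr =>
    rw [map_add]; exact (abs_add_le _ _).trans (add_le_add ihq ihr)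
  | mulX m A q i hq ih =>
    rw [map_mul, eval_X, abs_mul, mul_comm]
    exact mul_le_mul (hz i) ih (abs_nonneg _) (by linarith)
  | weak m m' A A' q hq hm hA ih => linarith

theorem const_mul {m : ℕ} {A : ℝ} {q : MvPolynomial (Fin n) ℝ} (h : Maj R m A q)
    (c : ℝ) : Maj R m (|c| * A) (C c * q) := by
  induction h with
  | const m A b h =>
    rw [← C_mul]
    exact .const _ _ _ (by rw [abs_mul]; exact mul_le_mul_of_nonneg_left h (abs_nonneg _))
  | add m A B q r hq hr ihq ihr => rw [mul_add, mul_add]; exact .add _ _ _ _ _ ihq ihr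
  | mulX m A q i hq ih =>
    rw [← mul_assoc (C c), mul_left_comm]; exact .mulX _ _ _ _ ih
  | weak m m' A A' q hq hm hA ih =>
    exact .weak _ _ _ _ _ ih hm (mul_le_mul_of_nonneg_left hA (abs_nonneg _))

theorem mul (hR : 1 ≤ R) {m m' : ℕ} {A B : ℝ} {q r : MvPolynomial (Fin n) ℝ} (h : Maj R m A q)
    (hr : Maj R m' B r) : Maj R (m + m') (A * B) (q * r) := by
  have hB := hr.nonneg hR
  induction h with
  | const m A b h =>
    exact .weak _ _ _ _ _ (hr.const_mul b) (by omega) (mul_le_mul_of_nonneg_right h hB)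
  | add m A A' q q' hq hr ihq ihr => rw [add_mul, add_mul]; exact .add _ _ _ _ _ ihq ihr
  | mulX m A q i hq ih =>
    rw [mul_right_comm q]
    have h1 := Maj.mulX _ _ _ i ih
    refine .weak _ _ _ _ _ h1 ?_ ?_
    · omega
    · rw [mul_assoc]
  | weak m m' A A' q hq hm hA ih =>
    exact .weak _ _ _ _ _ ih (by omega) (mul_le_mul_of_nonneg_right hA hB)

theorem deriv (hR : 1 ≤ R) {m' : ℕ} {P : ℝ} (hP : 0 ≤ P) (p : Fin n → MvPolynomial (Fin n) ℝ)
    (hp : ∀ i, Maj R m' P (p i))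
    {m : ℕ} {A : ℝ} {q : MvPolynomial (Fin n) ℝ} (h : Maj R m A q) :
    Maj R (m + m') (m * P * A) (mkDerivation ℝ p q) := by
  induction h with
  | const m A b h =>
    have hA : 0 ≤ A := (abs_nonneg b).trans h
    rw [derivation_C, ← C_0]
    exact .const _ _ _ (by rw [abs_zero]; positivity)
  | add m A A' q q' hq hr ihq ihr => rw [map_add, mul_add]; exact .add _ _ _ _ _ ihq ihr
  | mulX m A q i hq ih =>
    have hA := hq.nonneg hR
    rw [Derivation.leibniz, mkDerivation_X, smul_eq_mul, smul_eq_mul, mul_comm (X i)]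
    have h1 : Maj R (m + 1 + m') (A * P) (q * p i) :=
      .weak _ _ _ _ _ (hq.mul hR (hp i)) (by omega) le_rfl
    have h2 : Maj R (m + 1 + m') (R * (m * P * A)) (mkDerivation ℝ p q * X i) :=
      .weak _ _ _ _ _ (.mulX _ _ _ i ih) (by omega) le_rfl
    refine .weak _ _ _ _ _ (.add _ _ _ _ _ h1 h2) le_rfl ?_
    push_cast
    have : 0 ≤ (R - 1) * (A * P) := by
      have : 0 ≤ R - 1 := by linarith
      positivity
    nlinarith
  | weak m m₁ A A' q hq hm hA ih =>
    have hA0 := hq.nonneg hR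
    refine .weak _ _ _ _ _ ih (by omega) ?_
    have : (m : ℝ) ≤ m₁ := by exact_mod_cast hm
    gcongr

theorem exists_maj (hR : 1 ≤ R) (q : MvPolynomial (Fin n) ℝ) : ∃ m A, Maj R m A q := by
  induction q using MvPolynomial.induction_on with
  | C a => exact ⟨0, |a|, .const _ _ _ le_rfl⟩
  | add p q hp hq =>
    obtain ⟨m, A, h⟩ := hp
    obtain ⟨m', B, h'⟩ := hq
    exact ⟨max m m', A + B, .add _ _ _ _ _ (.weak _ _ _ _ _ h (le_max_left _ _) le_rfl)
      (.weak _ _ _ _ _ h' (le_max_right _ _) le_rfl)⟩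
  | mul_X p i hp =>
    obtain ⟨m, A, h⟩ := hp
    exact ⟨_, _, .mulX _ _ _ i h⟩

theorem exists_unif (hR : 1 ≤ R) {d : ℕ} (p : Fin n → Fin d → MvPolynomial (Fin n) ℝ) :
    ∃ m P, 0 ≤ P ∧ ∀ i j, Maj R m P (p i j) := by
  choose m A h using fun i j => exists_maj hR (p i j)
  refine ⟨∑ i, ∑ j, m i j, ∑ i, ∑ j, A i j, ?_, fun i j => .weak _ _ _ _ _ (h i j) ?_ ?_⟩
  · exact Finset.sum_nonneg fun i _ => Finset.sum_nonneg fun j _ => (h i j).nonneg hR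
  · exact (Finset.single_le_sum (f := fun j => m i j) (fun _ _ => Nat.zero_le _)
      (Finset.mem_univ j)).trans
      (Finset.single_le_sum (f := fun i => ∑ j, m i j) (fun _ _ => Nat.zero_le _)
        (Finset.mem_univ i))
  · exact (Finset.single_le_sum (f := fun j => A i j) (fun j _ => (h i j).nonneg hR)
      (Finset.mem_univ j)).trans
      (Finset.single_le_sum (f := fun i => ∑ j, A i j)
        (fun i _ => Finset.sum_nonneg fun j _ => (h i j).nonneg hR) (Finset.mem_univ i))

end Maj

/-- Iterated Lie derivatives. -/
def dIter {n d : ℕ} (p : Fin n → Fin d → MvPolynomial (Fin n) ℝ) (q : MvPolynomial (Fin n) ℝ) :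
    (k : ℕ) → (Fin k → Fin d) → MvPolynomial (Fin n) ℝ
  | 0, _ => q
  | k + 1, j => MvPolynomial.mkDerivation ℝ (fun i => p i (j 0)) (dIter p q k (Fin.tail j))

theorem dIter_maj {n d : ℕ} {R : ℝ} (hR : 1 ≤ R) (p : Fin n → Fin d → MvPolynomial (Fin n) ℝ)
    {m : ℕ} {P : ℝ} (hP : 0 ≤ P) (hp : ∀ i j, Maj R m P (p i j)) (i : Fin n) (k : ℕ)
    (j : Fin k → Fin d) :
    Maj R (1 + k * m) (R * ((1 + m) * P) ^ k * k.factorial) (dIter p (MvPolynomial.X i) k j) := by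
  induction k with
  | zero =>
    have := Maj.mulX (R := R) 0 1 (MvPolynomial.C 1) i (.const _ _ _ (by simp))
    simpa [dIter] using this
  | succ k ih =>
    have := (ih (Fin.tail j)).deriv hR hP (fun i => p i (j 0)) (fun i => hp i (j 0))
    refine .weak _ _ _ _ _ this (by ring_nf; omega) ?_
    rw [Nat.factorial_succ]
    push_cast
    have h1 : (1 + (k : ℝ) * m) ≤ (1 + m) * (k + 1) := by
      have : (0 : ℝ) ≤ m := by positivity
      have : (0 : ℝ) ≤ k := by positivity
      nlinarith
    have h2 : 0 ≤ P * (R * ((1 + m) * P) ^ k * k.factorial) := by positivity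
    calc _ = (1 + (k : ℝ) * m) * (P * (R * ((1 + m) * P) ^ k * k.factorial)) := by ring
      _ ≤ (1 + m) * (k + 1) * (P * (R * ((1 + m) * P) ^ k * k.factorial)) := by gcongr
      _ = _ := by ring

theorem hasDerivAt_eval {n d : ℕ} (p : Fin n → Fin d → MvPolynomial (Fin n) ℝ)
    (z : ℝ → Fin n → ℝ) (h : Fin d → ℝ) (t : ℝ)
    (hz : ∀ i, HasDerivAt (fun s => z s i) (∑ a, h a * MvPolynomial.eval (z t) (p i a)) t)
    (q : MvPolynomial (Fin n) ℝ) :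
    HasDerivAt (fun s => MvPolynomial.eval (z s) q)
      (∑ a, h a * MvPolynomial.eval (z t) (MvPolynomial.mkDerivation ℝ (fun i => p i a) q)) t := by
  induction q using MvPolynomial.induction_on with
  | C a => simpa using hasDerivAt_const t a
  | add p q hp hq =>
    simp only [map_add, mul_add, Finset.sum_add_distrib]
    exact hp.add hq
  | mul_X q i hq =>
    simp only [map_mul, MvPolynomial.eval_X]
    refine (hq.mul (hz i)).congr_deriv ?_
    simp only [Derivation.leibniz, MvPolynomial.mkDerivation_X, smul_eq_mul, map_add, map_mul,
      MvPolynomial.eval_X, mul_add, Finset.sum_add_distrib, Finset.sum_mul, Finset.mul_sum]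
    rw [add_comm]
    congr 1 <;> exact Finset.sum_congr rfl fun _ _ => by ring

/-- Elementary Taylor estimate. -/
theorem taylor_bound (N : ℕ) : ∀ (g : ℕ → ℝ → ℝ) (M : ℝ)
    (_ : ∀ k, ∀ t ∈ Set.Icc (0 : ℝ) 1, HasDerivAt (g k) (g (k + 1) t) t)
    (_ : ∀ t ∈ Set.Icc (0 : ℝ) 1, |g N t| ≤ M),
    ∀ t ∈ Set.Icc (0 : ℝ) 1,
      ‖g 0 t - ∑ k ∈ Finset.range N, t ^ k / k.factorial * g k 0‖ ≤ M * t ^ N / N.factorial := by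
  induction N with
  | zero => intro g M hg hM t ht; simpa using hM t ht
  | succ N ih =>
    intro g M hg hM
    have key := ih (fun k => g (k + 1)) M (fun k => hg (k + 1)) hM
    have hpow : ∀ (k : ℕ) (t : ℝ), HasDerivAt (fun s : ℝ => s ^ (k + 1) / (k + 1).factorial)
        (t ^ k / k.factorial) t := by
      intro k t
      refine ((hasDerivAt_pow (k + 1) t).div_const _).congr_deriv ?_
      rw [Nat.factorial_succ]
      push_cast
      have : (k.factorial : ℝ) ≠ 0 := by positivity
      have : (k + 1 : ℝ) ≠ 0 := by positivity
      field_simp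
    have hd : ∀ t ∈ Set.Icc (0 : ℝ) 1, HasDerivAt
        (fun t => g 0 t - ∑ k ∈ Finset.range (N + 1), t ^ k / k.factorial * g k 0)
        (g 1 t - ∑ k ∈ Finset.range N, t ^ k / k.factorial * g (k + 1) 0) t := by
      intro t ht
      refine (hg 0 t ht).sub ?_
      simp only [Finset.sum_range_succ']
      simpa using (HasDerivAt.fun_sum fun k _ => (hpow k t).mul_const (g (k + 1) 0)).add_const
        (g 0 0)
    refine image_norm_le_of_norm_deriv_right_le_deriv_boundary
      (f' := fun t => g 1 t - ∑ k ∈ Finset.range N, t ^ k / k.factorial * g (k + 1) 0)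
      (B' := fun t => M * t ^ N / N.factorial)
      (fun t ht => (hd t ht).continuousAt.continuousWithinAt)
      (fun t ht => (hd t ⟨ht.1, ht.2.le⟩).hasDerivWithinAt) ?_ ?_ ?_
    · simp [Finset.sum_range_succ']
    · intro t
      simpa [mul_div_assoc] using (hpow N t).const_mul M
    · intro t ht
      exact key t ⟨ht.1, ht.2.le⟩

/-- The formal power series with coefficients `c`. -/
def serOf {d : ℕ} (c : (k : ℕ) → (Fin k → Fin d) → ℝ) :
    FormalMultilinearSeries ℝ (Fin d → ℝ) ℝ := fun k =>
  ∑ j : Fin k → Fin d, (c k j / k.factorial) •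
    (ContinuousMultilinearMap.mkPiAlgebra ℝ (Fin k) ℝ).compContinuousLinearMap
      (fun l => ContinuousLinearMap.proj (R := ℝ) (φ := fun _ : Fin d => ℝ) (j l))

theorem serOf_apply {d : ℕ} (c : (k : ℕ) → (Fin k → Fin d) → ℝ) (k : ℕ) (v : Fin k → Fin d → ℝ) :
    serOf c k v = ∑ j : Fin k → Fin d, c k j / k.factorial * ∏ l, v l (j l) := by
  simp [serOf, ContinuousMultilinearMap.sum_apply]

theorem serOf_norm {d : ℕ} (c : (k : ℕ) → (Fin k → Fin d) → ℝ) (k : ℕ) (B : ℝ) (hB : 0 ≤ B)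
    (h : ∀ j, |c k j| ≤ B * k.factorial) : ‖serOf c k‖ ≤ d ^ k * B := by
  refine ContinuousMultilinearMap.opNorm_le_bound (by positivity) fun v => ?_
  rw [serOf_apply]
  refine (norm_sum_le _ _).trans ?_
  have : ∀ j : Fin k → Fin d, ‖c k j / k.factorial * ∏ l, v l (j l)‖ ≤ B * ∏ l, ‖v l‖ := by
    intro j
    rw [norm_mul, norm_prod]
    have hk : (0 : ℝ) < k.factorial := by positivity
    refine mul_le_mul ?_ (Finset.prod_le_prod (fun _ _ => norm_nonneg _)
      fun l _ => norm_le_pi_norm _ _) (Finset.prod_nonneg fun _ _ => norm_nonneg _) hB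
    rw [Real.norm_eq_abs, abs_div, abs_of_pos hk, div_le_iff₀ hk]
    exact h j
  refine (Finset.sum_le_sum fun j _ => this j).trans ?_
  simp [mul_assoc]

theorem y_analytic {n d : ℕ} (p : Fin n → Fin d → MvPolynomial (Fin n) ℝ)
    (I : Set (Fin d → ℝ)) (hI : IsOpen I) (y : (Fin d → ℝ) → (Fin n → ℝ))
    (hy : ∀ x ∈ I, HasFDerivAt y (matLin (fun i j => MvPolynomial.eval (y x) (p i j))) x)
    (x : Fin d → ℝ) (hx : x ∈ I) (i : Fin n) : AnalyticAt ℝ (fun z => y z i) x := by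
  set R : ℝ := ‖y x‖ + 1 with hRdef
  have hR : 1 ≤ R := by have := norm_nonneg (y x); linarith
  obtain ⟨m, P, hP, hp⟩ := Maj.exists_unif hR p
  set K : ℝ := (1 + m) * P with hK
  have hK0 : 0 ≤ K := by positivity
  have hev : ∀ᶠ z in nhds x, z ∈ I ∧ ‖y z‖ ≤ R := by
    refine Filter.Eventually.and (hI.mem_nhds hx) ?_
    have := (hy x hx).continuousAt.norm
    exact (this.eventually (gt_mem_nhds (lt_add_one ‖y x‖))).mono fun z hz => hz.le
  obtain ⟨r₀, hr₀, hball⟩ := Metric.eventually_nhds_iff_ball.1 hev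
  set r : ℝ := min r₀ (1 / (2 * (d * K + 1))) with hr
  have hdK : 0 ≤ d * K := by positivity
  have hrpos : 0 < r := lt_min hr₀ (by positivity)
  have hrK : d * K * r ≤ 1 / 2 := by
    have h1 : r ≤ 1 / (2 * (d * K + 1)) := min_le_right _ _
    rw [le_div_iff₀ (by positivity)] at h1
    nlinarith
  let c : (k : ℕ) → (Fin k → Fin d) → (Fin n → ℝ) → ℝ := fun k j w =>
    MvPolynomial.eval w (dIter p (MvPolynomial.X i) k j)
  have hc : ∀ z ∈ Metric.ball x r₀, ∀ k j, |c k j (y z)| ≤ R * K ^ k * k.factorial := by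
    intro z hz k j
    exact (dIter_maj hR p hP hp i k j).eval_le hR _
      fun l => (norm_le_pi_norm (y z) l).trans (hball z hz).2
  have hnorm : ∀ z ∈ Metric.ball x r₀, ∀ k, ‖serOf (fun k j => c k j (y z)) k‖ ≤ R * (d * K) ^ k := by
    intro z hz k
    refine (serOf_norm _ k (R * K ^ k) (by positivity) (hc z hz k)).trans (le_of_eq ?_)
    ring
  have hxb : x ∈ Metric.ball x r₀ := Metric.mem_ball_self hr₀
  refine HasFPowerSeriesAt.analyticAt (p := serOf (fun k j => c k j (y x))) ⟨ENNReal.ofReal r, ?_, ?_, ?_⟩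
  · refine FormalMultilinearSeries.le_radius_of_bound _ R fun k => ?_
    rw [Real.coe_toNNReal _ hrpos.le]
    calc _ ≤ R * (d * K) ^ k * r ^ k := by gcongr; exact hnorm x hxb k
      _ = R * (d * K * r) ^ k := by ring
      _ ≤ R * 1 := by
        gcongr
        exact pow_le_one₀ (by positivity) (by linarith)
      _ = R := mul_one R
  · simpa using hrpos
  · intro h hh
    have hhr : ‖h‖ < r := by
      rw [Metric.eball_ofReal] at hh
      simpa using hh
    -- points on the segment
    have hseg : ∀ t ∈ Set.Icc (0 : ℝ) 1, x + t • h ∈ Metric.ball x r₀ := by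
      intro t ht
      rw [mem_ball_iff_norm, add_sub_cancel_left, norm_smul, Real.norm_of_nonneg ht.1]
      have : r ≤ r₀ := min_le_left _ _
      nlinarith [ht.2, norm_nonneg h]
    let g : ℕ → ℝ → ℝ := fun k t => ∑ j : Fin k → Fin d, (∏ l, h (j l)) * c k j (y (x + t • h))
    have hgs : ∀ k t, g k t = k.factorial * serOf (fun k j => c k j (y (x + t • h))) k (fun _ => h) := by
      intro k t
      rw [serOf_apply, Finset.mul_sum]
      refine Finset.sum_congr rfl fun j _ => ?_
      have : (k.factorial : ℝ) ≠ 0 := by positivity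
      field_simp
    have hterm : ∀ z ∈ Metric.ball x r₀, ∀ k,
        ‖serOf (fun k j => c k j (y z)) k (fun _ => h)‖ ≤ R * (1 / 2) ^ k := by
      intro z hz k
      refine (ContinuousMultilinearMap.le_opNorm _ _).trans ?_
      rw [Finset.prod_const, Finset.card_univ, Fintype.card_fin]
      calc _ ≤ R * (d * K) ^ k * r ^ k := by gcongr; exact hnorm z hz k
        _ = R * (d * K * r) ^ k := by ring
        _ ≤ _ := by gcongr
    have hgd : ∀ k, ∀ t ∈ Set.Icc (0 : ℝ) 1, HasDerivAt (g k) (g (k + 1) t) t := by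
      intro k t ht
      have hline : HasDerivAt (fun s : ℝ => x + s • h) h t := by
        simpa using ((hasDerivAt_id t).smul_const h).const_add x
      have hyl := (hy _ (hball _ (hseg t ht)).1).comp_hasDerivAt t hline
      have hz : ∀ i, HasDerivAt (fun s => y (x + s • h) i)
          (∑ a, h a * MvPolynomial.eval (y (x + t • h)) (p i a)) t := by
        intro i
        refine (hasDerivAt_pi.1 hyl i).congr_deriv ?_
        change (Matrix.toLin' (Matrix.of fun i j =>
          MvPolynomial.eval (y (x + t • h)) (p i j)) h) i = _
        rw [Matrix.toLin'_apply]
        simp [Matrix.mulVec, dotProduct, mul_comm]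
      have hq := hasDerivAt_eval p (fun s => y (x + s • h)) h t hz
      refine (HasDerivAt.fun_sum fun j _ =>
        (hq (dIter p (MvPolynomial.X i) k j)).const_mul (∏ l, h (j l))).congr_deriv ?_
      simp only [g]
      rw [← (Fin.consEquiv (fun _ : Fin (k + 1) => Fin d)).sum_comp, Fintype.sum_prod_type,
        Finset.sum_comm]
      refine Finset.sum_congr rfl fun j _ => ?_
      rw [Finset.mul_sum]
      refine Finset.sum_congr rfl fun a _ => ?_
      simp [Fin.consEquiv, Fin.prod_univ_succ, c, dIter]
      ring
    have htay : ∀ N : ℕ, ‖y (x + h) i - ∑ k ∈ Finset.range N,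
        serOf (fun k j => c k j (y x)) k (fun _ => h)‖ ≤ R * (1 / 2) ^ N := by
      intro N
      have hN : (0 : ℝ) < N.factorial := by positivity
      have := taylor_bound N g (N.factorial * (R * (1 / 2) ^ N)) hgd (fun t ht => by
        rw [hgs, abs_mul, abs_of_pos hN]
        exact mul_le_mul_of_nonneg_left (hterm _ (hseg t ht) N) hN.le) 1 (by simp)
      have e0 : g 0 1 = y (x + h) i := by simp [g, c, dIter]
      have e1 : ∀ k : ℕ, (1 : ℝ) ^ k / k.factorial * g k 0 =
          serOf (fun k j => c k j (y x)) k (fun _ => h) := by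
        intro k
        have : (k.factorial : ℝ) ≠ 0 := by positivity
        rw [hgs]
        simp only [zero_smul, add_zero]
        field_simp
        simp
      simp only [e0, e1] at this
      refine this.trans (le_of_eq ?_)
      field_simp
      simp
    have hsum : Summable fun k => serOf (fun k j => c k j (y x)) k (fun _ => h) :=
      Summable.of_norm_bounded
        ((summable_geometric_of_lt_one (by norm_num) (by norm_num : (1 / 2 : ℝ) < 1)).mul_left R)
        (hterm x hxb)
    refine (hsum.hasSum_iff_tendsto_nat).2 ?_
    rw [tendsto_iff_norm_sub_tendsto_zero]
    refine squeeze_zero (fun _ => norm_nonneg _) (fun N => ?_)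
      (by simpa using (tendsto_pow_atTop_nhds_zero_of_lt_one (by norm_num)
        (by norm_num : (1 / 2 : ℝ) < 1)).const_mul R)
    rw [norm_sub_rev]
    simpa using htay N

/-- **Every function in `GPVAL` is real-analytic**: each component of `f` is analytic
at every point of the open connected domain `I`. -/
theorem gpval_analytic {d e : ℕ} (I : Set (Fin d → ℝ))
    (hIopen : IsOpen I) (hIconn : IsConnected I)
    (f : (Fin d → ℝ) → (Fin e → ℝ)) (hf : GPVAL I f) :
    ∀ x ∈ I, ∀ i : Fin e, AnalyticAt ℝ (fun z => f z i) x := by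
  obtain ⟨sp, n, hn, p, x₀, y₀, y, -, -, -, hy, hfy, -⟩ := hf
  intro x hx i
  refine (y_analytic p I hIopen y hy x hx (Fin.castLE hn i)).congr ?_
  filter_upwards [hIopen.mem_nhds hx] with z hz
  exact (hfy z hz i).symm
end
end

section
/- AWP is contained in AP: every partial function f :⊆ ℝⁿ → ℝᵐ that belongs to AWP also belongs to AP; consequently AP = AWP. -/
noncomputable section

/-- Evaluation of a vector of multivariate polynomials at a point. -/
def pEval {d e : ℕ} (p : Fin e → MvPolynomial (Fin d) ℝ) (x : Fin d → ℝ) : Fin e → ℝ :=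
  fun i => MvPolynomial.eval x (p i)

/-- Length of the solution curve of the PIVP `y' = p(y)` on `[0, t]`
(the sup norm of the derivative is integrated). -/
def pLen {d : ℕ} (p : Fin d → MvPolynomial (Fin d) ℝ) (y : ℝ → Fin d → ℝ) (t : ℝ) : ℝ :=
  ∫ s in (0:ℝ)..t, ‖pEval p (y s)‖

/-- `Ω : ℝ₊² → ℝ₊` is a polynomial function. -/
def IsPolyFun2 (Ω : ℝ → ℝ → ℝ) : Prop :=
  (∃ P : MvPolynomial (Fin 2) ℝ, ∀ a b : ℝ, Ω a b = MvPolynomial.eval ![a, b] P) ∧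
  ∀ a b : ℝ, 0 ≤ a → 0 ≤ b → 0 ≤ Ω a b

/-- The class `AP` of polynomial-length computable partial functions `f :⊆ ℝⁿ → ℝᵐ`
(`dom` is the domain of `f`). -/
def AP {n m : ℕ} (dom : Set (Fin n → ℝ)) (f : (Fin n → ℝ) → (Fin m → ℝ)) : Prop :=
  ∃ (d : ℕ) (hd : m ≤ d) (p : Fin d → MvPolynomial (Fin d) ℝ)
    (q : Fin d → MvPolynomial (Fin n) ℝ) (Ω : ℝ → ℝ → ℝ),
    IsPolyFun2 Ω ∧
    ∀ x ∈ dom, ∃ y : ℝ → Fin d → ℝ,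
      (y 0 = fun i => MvPolynomial.eval x (q i)) ∧
      (∀ t : ℝ, 0 ≤ t → HasDerivAt y (pEval p (y t)) t) ∧
      (∀ t : ℝ, 0 ≤ t → ∀ μ : ℝ, 0 ≤ μ → Ω ‖x‖ μ ≤ pLen p y t →
        ‖(fun i : Fin m => y t (Fin.castLE hd i)) - f x‖ ≤ Real.exp (-μ)) ∧
      (∀ t : ℝ, 0 ≤ t → t ≤ pLen p y t)

/-- `Υ : ℝ₊³ → ℝ₊` is a polynomial function. -/
def IsPolyFun3 (Υ : ℝ → ℝ → ℝ → ℝ) : Prop :=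
  (∃ P : MvPolynomial (Fin 3) ℝ, ∀ a b c : ℝ, Υ a b c = MvPolynomial.eval ![a, b, c] P) ∧
  ∀ a b c : ℝ, 0 ≤ a → 0 ≤ b → 0 ≤ c → 0 ≤ Υ a b c

/-- The class `AWP` of weakly computable partial functions `f :⊆ ℝⁿ → ℝᵐ`. -/
def AWP {n m : ℕ} (dom : Set (Fin n → ℝ)) (f : (Fin n → ℝ) → (Fin m → ℝ)) : Prop :=
  ∃ (Ω : ℝ → ℝ → ℝ) (Υ : ℝ → ℝ → ℝ → ℝ), IsPolyFun2 Ω ∧ IsPolyFun3 Υ ∧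
  ∃ (d : ℕ) (hd : m ≤ d) (p : Fin d → MvPolynomial (Fin d) ℝ)
    (q : Fin d → MvPolynomial (Fin (n + 1)) ℝ),
    ∀ x ∈ dom, ∀ μ : ℝ, 0 ≤ μ → ∃ y : ℝ → Fin d → ℝ,
      (y 0 = fun i => MvPolynomial.eval (Fin.snoc x μ) (q i)) ∧
      (∀ t : ℝ, 0 ≤ t → HasDerivAt y (pEval p (y t)) t) ∧
      (∀ t : ℝ, 0 ≤ t → Ω ‖x‖ μ ≤ t →
        ‖(fun i : Fin m => y t (Fin.castLE hd i)) - f x‖ ≤ Real.exp (-μ)) ∧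
      (∀ t : ℝ, 0 ≤ t → ‖y t‖ ≤ Υ ‖x‖ μ t)

section

open Set in
/-- Global existence for bounded, Lipschitz (on compact time intervals) fields. -/
theorem global_exist {E : Type*} [NormedAddCommGroup E] [NormedSpace ℝ E] [CompleteSpace E]
    (v : ℝ → E → E) (hc : ∀ u, Continuous (fun t => v t u))
    (hL : ∀ T : ℝ, ∃ K : NNReal, ∀ t ∈ Icc (-T) T, LipschitzWith K (v t))
    (hB : ∀ T : ℝ, ∃ C : NNReal, ∀ t ∈ Icc (-T) T, ∀ u, ‖v t u‖ ≤ C) (y0 : E) :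
    ∃ y : ℝ → E, y 0 = y0 ∧ ∀ t, HasDerivAt y (v t (y t)) t := by
  have key : ∀ N : ℕ, ∃ y : ℝ → E, y 0 = y0 ∧
      ∀ t ∈ Ioo (-(N+1:ℝ)) (N+1), HasDerivAt y (v t (y t)) t := by
    intro N
    obtain ⟨K, hK⟩ := hL (N+1)
    obtain ⟨C, hC⟩ := hB (N+1)
    have hN : (0:ℝ) ≤ N := Nat.cast_nonneg N
    have h0 : (0:ℝ) ∈ Icc (-(N+1:ℝ)) (N+1) := ⟨by linarith, by linarith⟩
    have hp : IsPicardLindelof v (⟨0, h0⟩ : Icc (-(N+1:ℝ)) (N+1)) y0 (C * (N+1)) 0 C K := by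
      constructor
      · exact fun t ht => (hK t ht).lipschitzOnWith
      · exact fun u _ => (hc u).continuousOn
      · exact fun t ht u _ => hC t ht u
      · simp
    obtain ⟨y, hy0, hy⟩ := hp.exists_eq_forall_mem_Icc_hasDerivWithinAt₀
    exact ⟨y, hy0, fun t ht => (hy t (Ioo_subset_Icc_self ht)).hasDerivAt (Icc_mem_nhds ht.1 ht.2)⟩
  choose Y hY0 hY using key
  have huniq : ∀ N M : ℕ, N ≤ M → EqOn (Y N) (Y M) (Ioo (-(N+1:ℝ)) (N+1)) := by
    intro N M hNM
    obtain ⟨K, hK⟩ := hL (N+1)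
    have hN : (0:ℝ) ≤ N := Nat.cast_nonneg N
    have hNM' : (N:ℝ) ≤ M := by exact_mod_cast hNM
    refine ODE_solution_unique_of_mem_Ioo (K := K) (v := v) (s := fun _ => univ) (t₀ := 0)
      (fun t ht => (hK t (Ioo_subset_Icc_self ht)).lipschitzOnWith) ⟨by linarith, by linarith⟩
      (fun t ht => ⟨hY N t ht, trivial⟩) (fun t ht => ⟨hY M t ⟨by linarith [ht.1], by linarith [ht.2]⟩, trivial⟩)
      (by rw [hY0, hY0])
  refine ⟨fun t => Y (⌈|t|⌉₊) t, by simp [hY0], fun t => ?_⟩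
  have habs : |t| < (⌈|t|⌉₊ : ℝ) + 1 := by linarith [Nat.le_ceil |t|]
  set N := ⌈|t|⌉₊ + 1 with hNdef
  have htm : t ∈ Ioo (-((⌈|t|⌉₊ : ℝ)+1)) ((⌈|t|⌉₊ : ℝ)+1) := abs_lt.1 habs
  have hN1 : ((N:ℕ):ℝ) = ⌈|t|⌉₊ + 1 := by simp [hNdef]
  have ev : (fun s => Y (⌈|s|⌉₊) s) =ᶠ[nhds t] Y N := by
    have : Ioo (-((⌈|t|⌉₊ : ℝ)+1)) ((⌈|t|⌉₊ : ℝ)+1) ∈ nhds t := isOpen_Ioo.mem_nhds htm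
    filter_upwards [this] with s hs
    have hs' : |s| ≤ (N:ℕ) := by rw [hN1]; exact (abs_lt.2 hs).le
    have hle : ⌈|s|⌉₊ ≤ N := Nat.ceil_le.2 hs'
    refine huniq _ _ hle ?_
    have : |s| < (⌈|s|⌉₊ : ℝ) + 1 := by linarith [Nat.le_ceil |s|]
    exact abs_lt.1 this
  have hd := hY N t ⟨by rw [hN1]; linarith [htm.1], by rw [hN1]; linarith [htm.2]⟩
  have := hd.congr_of_eventuallyEq ev
  rw [← ev.eq_of_nhds] at this
  exact this

/-- antiderivative of a continuous function -/
theorem hasDerivAt_int {E : Type*} [NormedAddCommGroup E] [NormedSpace ℝ E] [CompleteSpace E]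
    {g : ℝ → E} (hg : Continuous g) (a t : ℝ) :
    HasDerivAt (fun u => ∫ s in a..u, g s) (g t) t :=
  intervalIntegral.integral_hasDerivAt_right (hg.intervalIntegrable _ _)
    hg.stronglyMeasurable.stronglyMeasurableAtFilter hg.continuousAt

theorem lin_exist {E : Type*} [NormedAddCommGroup E] [NormedSpace ℝ E] [CompleteSpace E]
    {γ : ℝ → ℝ} (hγ : Continuous γ) {g : ℝ → E} (hg : Continuous g) :
    ∃ u : ℝ → E, u 0 = 0 ∧ ∀ t, HasDerivAt u (γ t • (g t - u t)) t := by
  set Γ : ℝ → ℝ := fun t => ∫ s in (0:ℝ)..t, γ s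
  have hΓ : ∀ t, HasDerivAt Γ (γ t) t := hasDerivAt_int hγ 0
  have hΓc : Continuous Γ := continuous_iff_continuousAt.2 fun t => (hΓ t).continuousAt
  have hI : ∀ t, HasDerivAt (fun t => ∫ s in (0:ℝ)..t, (Real.exp (Γ s) * γ s) • g s)
    ((Real.exp (Γ t) * γ t) • g t) t := hasDerivAt_int (by fun_prop) 0
  refine ⟨fun t => Real.exp (-Γ t) • ∫ s in (0:ℝ)..t, (Real.exp (Γ s) * γ s) • g s, by simp, fun t => ?_⟩
  have h := ((hΓ t).neg.exp).smul (hI t)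
  refine h.congr_deriv ?_
  have : Real.exp (-Γ t) * Real.exp (Γ t) = 1 := by rw [← Real.exp_add]; simp
  simp only [Pi.neg_apply]
  rw [smul_smul, ← mul_assoc, this, one_mul]
  module

/-- existence for `y' = F(t,y) + β (Q - y)` with `F` bounded Lipschitz. -/
theorem semilin_exist {E : Type*} [NormedAddCommGroup E] [NormedSpace ℝ E] [CompleteSpace E]
    (F : ℝ → E → E) (hc : ∀ u : ℝ → E, Continuous u → Continuous (fun t => F t (u t)))
    (hL : ∀ T : ℝ, ∃ K : NNReal, ∀ t ∈ Set.Icc (-T) T, LipschitzWith K (F t))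
    (hB : ∀ T : ℝ, ∃ C : NNReal, ∀ t ∈ Set.Icc (-T) T, ∀ u, ‖F t u‖ ≤ C)
    {β : ℝ → ℝ} (hβ : Continuous β) {Q : ℝ → E} (hQ : Continuous Q) (y0 : E) :
    ∃ y : ℝ → E, y 0 = y0 ∧ ∀ t, HasDerivAt y (F t (y t) + β t • (Q t - y t)) t := by
  set Γ : ℝ → ℝ := fun t => ∫ s in (0:ℝ)..t, β s
  have hΓ : ∀ t, HasDerivAt Γ (β t) t := hasDerivAt_int hβ 0
  have hΓc : Continuous Γ := continuous_iff_continuousAt.2 fun t => (hΓ t).continuousAt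
  have bdd : ∀ (h : ℝ → ℝ), Continuous h → ∀ T : ℝ, ∃ C : NNReal, ∀ t ∈ Set.Icc (-T) T, h t ≤ C := by
    intro h hh T
    obtain ⟨C, hC⟩ := (isCompact_Icc (a := -T) (b := T)).exists_bound_of_continuousOn hh.continuousOn
    exact ⟨C.toNNReal, fun t ht => ((le_abs_self _).trans (hC t ht)).trans (Real.le_coe_toNNReal C)⟩
  obtain ⟨v, hv0, hv⟩ := global_exist
    (fun t u => Real.exp (Γ t) • (F t (Real.exp (-Γ t) • u) + β t • Q t))
    (fun u => by
      have := hc (fun t => Real.exp (-Γ t) • u) (by fun_prop)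
      exact (Real.continuous_exp.comp hΓc).smul (this.add (hβ.smul hQ)))
    (fun T => by
      obtain ⟨K, hK⟩ := hL T
      refine ⟨K, fun t ht => LipschitzWith.of_dist_le_mul fun a b => ?_⟩
      have := (hK t ht).dist_le_mul (Real.exp (-Γ t) • a) (Real.exp (-Γ t) • b)
      rw [dist_eq_norm] at this ⊢
      rw [← smul_sub, add_sub_add_right_eq_sub, norm_smul, Real.norm_eq_abs, Real.abs_exp]
      rw [dist_eq_norm, ← smul_sub, norm_smul, Real.norm_eq_abs, Real.abs_exp] at this
      calc _ ≤ Real.exp (Γ t) * (K * (Real.exp (-Γ t) * ‖a - b‖)) := by gcongr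
        _ = (Real.exp (Γ t) * Real.exp (-Γ t)) * (K * ‖a - b‖) := by ring
        _ = _ := by rw [← Real.exp_add]; simp [dist_eq_norm])
    (fun T => by
      obtain ⟨C, hC⟩ := hB T
      obtain ⟨C1, hC1⟩ := bdd (fun t => Real.exp (Γ t)) (by fun_prop) T
      obtain ⟨C2, hC2⟩ := bdd (fun t => ‖β t • Q t‖) (by fun_prop) T
      refine ⟨C1 * (C + C2), fun t ht u => ?_⟩
      rw [norm_smul, Real.norm_eq_abs, Real.abs_exp]
      push_cast
      have h1 := hC1 t ht
      have h2 := hC2 t ht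
      have h3 := norm_add_le (F t (Real.exp (-Γ t) • u)) (β t • Q t)
      have h4 := hC t ht (Real.exp (-Γ t) • u)
      gcongr
      linarith) y0
  refine ⟨fun t => Real.exp (-Γ t) • v t, by simp [Γ, hv0], fun t => ?_⟩
  have h := ((hΓ t).neg.exp).smul (hv t)
  refine h.congr_deriv ?_
  have : Real.exp (-Γ t) * Real.exp (Γ t) = 1 := by rw [← Real.exp_add]; simp
  simp only [Pi.neg_apply]
  rw [smul_smul, this, one_smul]
  module

open Set in
/-- relaxation lemma -/
theorem relax {E : Type*} [NormedAddCommGroup E] [NormedSpace ℝ E]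
    {β : ℝ → ℝ} (hβ : Continuous β) {u g e : ℝ → E} {c : E} {t0 t1 η ε : ℝ}
    (hu : ∀ t ∈ Icc t0 t1, HasDerivAt u (e t + β t • (g t - u t)) t)
    (hβ0 : ∀ t ∈ Icc t0 t1, 0 ≤ β t)
    (hg : ∀ t ∈ Icc t0 t1, ‖g t - c‖ ≤ η) (he : ∀ t ∈ Icc t0 t1, ‖e t‖ ≤ ε) :
    ∀ t ∈ Icc t0 t1, ‖u t - c‖ ≤ Real.exp (-∫ s in t0..t, β s) * ‖u t0 - c‖
      + (1 - Real.exp (-∫ s in t0..t, β s)) * η + ε * (t - t0) := by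
  intro t ht
  set B : ℝ → ℝ := fun t => ∫ s in t0..t, β s with hBdef
  have hB : ∀ t, HasDerivAt B (β t) t := hasDerivAt_int hβ t0
  have hB0 : B t0 = 0 := by simp [B]
  have hε : 0 ≤ ε := (norm_nonneg _).trans (he t ht)
  have hw : ∀ s ∈ Icc t0 t1, HasDerivAt (fun s => Real.exp (B s) • (u s - c))
      (Real.exp (B s) • (e s + β s • (g s - c))) s := by
    intro s hs
    refine ((hB s).exp.smul ((hu s hs).sub_const c)).congr_deriv ?_
    module
  have hW : ∀ s, HasDerivAt (fun s => ‖u t0 - c‖ + (Real.exp (B s) - 1) * η + Real.exp (B s) * (ε * (s - t0)))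
      (Real.exp (B s) * β s * η + (Real.exp (B s) * β s * (ε * (s - t0)) + Real.exp (B s) * ε)) s := by
    intro s
    refine ((((hB s).exp.sub_const 1).mul_const η).const_add (‖u t0 - c‖)).add
      ((hB s).exp.mul (((hasDerivAt_id s).sub_const t0).const_mul ε)) |>.congr_deriv ?_
    simp
  have := image_norm_le_of_norm_deriv_right_le_deriv_boundary
    (f := fun s => Real.exp (B s) • (u s - c)) (a := t0) (b := t1)
    (fun s hs => (hw s hs).continuousAt.continuousWithinAt)
    (fun s hs => (hw s (Ico_subset_Icc_self hs)).hasDerivWithinAt) (by simp [hB0]) hW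
    (fun s hs' => by
      have hs := Ico_subset_Icc_self hs'
      rw [norm_smul, Real.norm_eq_abs, Real.abs_exp]
      have h1 := norm_add_le (e s) (β s • (g s - c))
      rw [norm_smul, Real.norm_of_nonneg (hβ0 s hs)] at h1
      have h2 : β s * ‖g s - c‖ ≤ β s * η := mul_le_mul_of_nonneg_left (hg s hs) (hβ0 s hs)
      have h3 := he s hs
      have h4 : ‖e s + β s • (g s - c)‖ ≤ ε + β s * η := by linarith
      have h5 : 0 ≤ Real.exp (B s) * β s * (ε * (s - t0)) := by
        have := hβ0 s hs
        have : 0 ≤ s - t0 := by linarith [hs.1]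
        positivity
      have := mul_le_mul_of_nonneg_left h4 (Real.exp_pos (B s)).le
      nlinarith) ht
  simp only [norm_smul, Real.norm_eq_abs, Real.abs_exp] at this
  have h6 : Real.exp (-B t) * Real.exp (B t) = 1 := by rw [← Real.exp_add]; simp
  have h7 := mul_le_mul_of_nonneg_left this (Real.exp_pos (-B t)).le
  rw [← mul_assoc, h6, one_mul] at h7
  refine h7.trans (le_of_eq ?_)
  have : Real.exp (-B t) * (‖u t0 - c‖ + (Real.exp (B t) - 1) * η + Real.exp (B t) * (ε * (t - t0)))
    = Real.exp (-B t) * ‖u t0 - c‖ + (Real.exp (-B t) * Real.exp (B t) - Real.exp (-B t)) * η + (Real.exp (-B t) * Real.exp (B t)) * (ε * (t-t0)) := by ring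
  rw [this, h6]; ring

end

section

open MvPolynomial in
theorem poly_bound1 {σ : Type*} [Fintype σ] (P : MvPolynomial σ ℝ) :
    ∃ a : ℕ, ∀ b : ℕ, a ≤ b → ∀ S : ℝ, 2 ≤ S → ∀ v : σ → ℝ, ‖v‖ ≤ S → |eval v P| ≤ S ^ b := by
  have mono : ∀ S : ℝ, 2 ≤ S → ∀ a b : ℕ, a ≤ b → S ^ a ≤ S ^ b := fun S hS a b hab =>
    pow_le_pow_right₀ (by linarith) hab
  induction P using MvPolynomial.induction_on with
  | C r =>
    obtain ⟨a, ha⟩ := pow_unbounded_of_one_lt |r| (one_lt_two (α := ℝ))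
    refine ⟨a, fun b hb S hS v hv => ?_⟩
    rw [eval_C]
    exact ha.le.trans ((pow_le_pow_left₀ (by norm_num) hS a).trans (mono S hS a b hb))
  | add p q hp hq =>
    obtain ⟨a, ha⟩ := hp
    obtain ⟨a', ha'⟩ := hq
    refine ⟨max a a' + 1, fun b hb S hS v hv => ?_⟩
    have h1 := ha (max a a') (le_max_left _ _) S hS v hv
    have h2 := ha' (max a a') (le_max_right _ _) S hS v hv
    rw [map_add]
    calc _ ≤ |eval v p| + |eval v q| := abs_add_le _ _
      _ ≤ S ^ (max a a') * 2 := by linarith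
      _ ≤ S ^ (max a a') * S := by gcongr
      _ = S ^ (max a a' + 1) := by ring
      _ ≤ _ := mono S hS _ _ hb
  | mul_X p i hp =>
    obtain ⟨a, ha⟩ := hp
    refine ⟨a + 1, fun b hb S hS v hv => ?_⟩
    have h1 := ha a le_rfl S hS v hv
    have h2 : |v i| ≤ S := (norm_le_pi_norm v i).trans hv
    rw [map_mul, eval_X, abs_mul]
    calc _ ≤ S ^ a * S := by gcongr
      _ = S ^ (a+1) := by ring
      _ ≤ _ := mono S hS _ _ hb

open MvPolynomial in
theorem poly_lip1 {σ : Type*} [Fintype σ] (P : MvPolynomial σ ℝ) :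
    ∃ a : ℕ, ∀ b : ℕ, a ≤ b → ∀ S : ℝ, 2 ≤ S → ∀ v w : σ → ℝ, ‖v‖ ≤ S → ‖w‖ ≤ S →
      |eval v P - eval w P| ≤ S ^ b * ‖v - w‖ := by
  have mono : ∀ S : ℝ, 2 ≤ S → ∀ a b : ℕ, a ≤ b → S ^ a ≤ S ^ b := fun S hS a b hab =>
    pow_le_pow_right₀ (by linarith) hab
  induction P using MvPolynomial.induction_on with
  | C r =>
    refine ⟨0, fun b hb S hS v w hv hw => ?_⟩
    have : 0 ≤ S ^ b * ‖v - w‖ := mul_nonneg (pow_nonneg (by linarith) _) (norm_nonneg _)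
    simpa using this
  | add p q hp hq =>
    obtain ⟨a, ha⟩ := hp
    obtain ⟨a', ha'⟩ := hq
    refine ⟨max a a' + 1, fun b hb S hS v w hv hw => ?_⟩
    have h1 := ha (max a a') (le_max_left _ _) S hS v w hv hw
    have h2 := ha' (max a a') (le_max_right _ _) S hS v w hv hw
    have h0 : 0 ≤ S ^ (max a a') * ‖v - w‖ := mul_nonneg (pow_nonneg (by linarith) _) (norm_nonneg _)
    rw [map_add, map_add]
    calc _ = |(eval v p - eval w p) + (eval v q - eval w q)| := by ring_nf
      _ ≤ |eval v p - eval w p| + |eval v q - eval w q| := abs_add_le _ _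
      _ ≤ (S ^ (max a a') * ‖v - w‖) * 2 := by linarith
      _ ≤ (S ^ (max a a') * ‖v - w‖) * S := by gcongr
      _ = S ^ (max a a' + 1) * ‖v - w‖ := by ring
      _ ≤ _ := by gcongr ?_ * _; exact mono S hS _ _ hb
  | mul_X p i hp =>
    obtain ⟨a, ha⟩ := hp
    obtain ⟨a', ha'⟩ := poly_bound1 p
    refine ⟨max a a' + 2, fun b hb S hS v w hv hw => ?_⟩
    have h1 := ha (max a a') (le_max_left _ _) S hS v w hv hw
    have h3 := ha' (max a a') (le_max_right _ _) S hS w hw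
    have h2 : |v i| ≤ S := (norm_le_pi_norm v i).trans hv
    have h4 : |v i - w i| ≤ ‖v - w‖ := norm_le_pi_norm (v - w) i
    have hp : 0 ≤ S ^ (max a a') := pow_nonneg (by linarith) _
    have hn := norm_nonneg (v - w)
    rw [map_mul, eval_X, map_mul, eval_X]
    calc _ = |(eval v p - eval w p) * v i + eval w p * (v i - w i)| := by ring_nf
      _ ≤ |eval v p - eval w p| * |v i| + |eval w p| * |v i - w i| := by
        rw [← abs_mul, ← abs_mul]; exact abs_add_le _ _
      _ ≤ (S ^ (max a a') * ‖v - w‖) * S + S ^ (max a a') * ‖v - w‖ := by gcongr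
      _ ≤ (S ^ (max a a') * ‖v - w‖) * S + S ^ (max a a') * ‖v - w‖ * S := by
        have := mul_nonneg hp hn; nlinarith
      _ = (S ^ (max a a') * ‖v - w‖) * S * 2 := by ring
      _ ≤ (S ^ (max a a') * ‖v - w‖) * S * S := by gcongr
      _ = S ^ (max a a' + 2) * ‖v - w‖ := by ring
      _ ≤ _ := by gcongr ?_ * _; exact mono S hS _ _ hb

/-- evaluation of a family of polynomials, arbitrary index types -/
def gEval {σ τ : Type*} (p : τ → MvPolynomial σ ℝ) (x : σ → ℝ) : τ → ℝ :=
  fun i => MvPolynomial.eval x (p i)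

theorem poly_bound {σ τ : Type*} [Fintype σ] [Fintype τ] (p : τ → MvPolynomial σ ℝ) :
    ∃ a : ℕ, ∀ b : ℕ, a ≤ b → ∀ S : ℝ, 2 ≤ S → ∀ v : σ → ℝ, ‖v‖ ≤ S → ‖gEval p v‖ ≤ S ^ b := by
  choose a ha using fun i => poly_bound1 (p i)
  refine ⟨∑ i, a i, fun b hb S hS v hv => ?_⟩
  refine (pi_norm_le_iff_of_nonneg (pow_nonneg (by linarith) _)).2 fun i => ?_
  exact ha i b ((Finset.single_le_sum (fun _ _ => Nat.zero_le _) (Finset.mem_univ i)).trans hb) S hS v hv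

theorem poly_lip {σ τ : Type*} [Fintype σ] [Fintype τ] (p : τ → MvPolynomial σ ℝ) :
    ∃ a : ℕ, ∀ b : ℕ, a ≤ b → ∀ S : ℝ, 2 ≤ S → ∀ v w : σ → ℝ, ‖v‖ ≤ S → ‖w‖ ≤ S →
      ‖gEval p v - gEval p w‖ ≤ S ^ b * ‖v - w‖ := by
  choose a ha using fun i => poly_lip1 (p i)
  refine ⟨∑ i, a i, fun b hb S hS v w hv hw => ?_⟩
  refine (pi_norm_le_iff_of_nonneg (mul_nonneg (pow_nonneg (by linarith) _) (norm_nonneg _))).2 fun i => ?_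
  exact ha i b ((Finset.single_le_sum (fun _ _ => Nat.zero_le _) (Finset.mem_univ i)).trans hb) S hS v w hv hw

theorem gEval_continuous {σ τ : Type*} (p : τ → MvPolynomial σ ℝ) :
    Continuous (gEval p) := by
  refine continuous_pi fun i => ?_
  exact MvPolynomial.continuous_eval (p i)

/-- reindexing -/
def reP {σ τ : Type*} (e : σ ≃ τ) (p : σ → MvPolynomial σ ℝ) : τ → MvPolynomial τ ℝ :=
  fun i => MvPolynomial.rename e (p (e.symm i))

theorem gEval_reP {σ τ : Type*} (e : σ ≃ τ) (p : σ → MvPolynomial σ ℝ) (y : σ → ℝ) :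
    gEval (reP e p) (y ∘ e.symm) = gEval p y ∘ e.symm := by
  ext i
  simp only [gEval, reP, MvPolynomial.eval_rename, Function.comp_assoc, Equiv.symm_comp_self,
    Function.comp_id, Function.comp_apply]

theorem norm_comp_equiv {σ τ : Type*} [Fintype σ] [Fintype τ] (e : τ ≃ σ) (y : σ → ℝ) :
    ‖y ∘ e‖ = ‖y‖ := by
  refine le_antisymm ((pi_norm_le_iff_of_nonneg (norm_nonneg _)).2 fun i => norm_le_pi_norm y _)
    ((pi_norm_le_iff_of_nonneg (norm_nonneg _)).2 fun i => ?_)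
  have := norm_le_pi_norm (y ∘ e) (e.symm i)
  simpa using this

theorem hasDerivAt_comp_equiv {σ τ : Type*} [Fintype σ] [Fintype τ] (e : τ ≃ σ) {y : ℝ → σ → ℝ}
    {y' : σ → ℝ} {t : ℝ} (h : HasDerivAt y y' t) :
    HasDerivAt (fun t => y t ∘ e) (y' ∘ e) t :=
  hasDerivAt_pi.2 fun i => hasDerivAt_pi.1 h (e i)

/-- `IsPolyFun2` for a convenient family -/
theorem isPolyFun2_pow (c : ℝ) (hc : 0 ≤ c) (N : ℕ) : IsPolyFun2 (fun a b => (c + a + b) ^ N) := by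
  refine ⟨⟨(MvPolynomial.C c + MvPolynomial.X 0 + MvPolynomial.X 1) ^ N, fun a b => by simp⟩,
    fun a b ha hb => by positivity⟩

theorem isPolyFun3_pow (c : ℝ) (hc : 0 ≤ c) (N : ℕ) :
    IsPolyFun3 (fun a b d => (c + a + b + d) ^ N) := by
  refine ⟨⟨(MvPolynomial.C c + MvPolynomial.X 0 + MvPolynomial.X 1 + MvPolynomial.X 2) ^ N,
    fun a b d => by simp⟩, fun a b d ha hb hd => by positivity⟩

theorem polyFun2_bound {Ω : ℝ → ℝ → ℝ} (h : IsPolyFun2 Ω) :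
    ∃ a : ℕ, ∀ b : ℕ, a ≤ b → ∀ S : ℝ, 2 ≤ S → ∀ u v : ℝ, 0 ≤ u → 0 ≤ v → u ≤ S → v ≤ S →
      Ω u v ≤ S ^ b := by
  obtain ⟨⟨P, hP⟩, -⟩ := h
  obtain ⟨a, ha⟩ := poly_bound1 P
  refine ⟨a, fun b hb S hS u v hu hv hu' hv' => ?_⟩
  rw [hP]
  refine (le_abs_self _).trans (ha b hb S hS _ ?_)
  refine (pi_norm_le_iff_of_nonneg (by linarith)).2 fun i => ?_
  fin_cases i
  · simpa [abs_of_nonneg hu] using hu'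
  · simpa [abs_of_nonneg hv] using hv'

theorem polyFun3_bound {Ω : ℝ → ℝ → ℝ → ℝ} (h : IsPolyFun3 Ω) :
    ∃ a : ℕ, ∀ b : ℕ, a ≤ b → ∀ S : ℝ, 2 ≤ S → ∀ u v w : ℝ, 0 ≤ u → 0 ≤ v → 0 ≤ w →
      u ≤ S → v ≤ S → w ≤ S → Ω u v w ≤ S ^ b := by
  obtain ⟨⟨P, hP⟩, -⟩ := h
  obtain ⟨a, ha⟩ := poly_bound1 P
  refine ⟨a, fun b hb S hS u v w hu hv hw hu' hv' hw' => ?_⟩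
  rw [hP]
  refine (le_abs_self _).trans (ha b hb S hS _ ?_)
  refine (pi_norm_le_iff_of_nonneg (by linarith)).2 fun i => ?_
  fin_cases i
  · simpa [abs_of_nonneg hu] using hu'
  · simpa [abs_of_nonneg hv] using hv'
  · simpa [abs_of_nonneg hw] using hw'

/-- membership in `AP` from a system indexed by `Fin d ⊕ κ` -/
theorem AP_of_sum {n m d : ℕ} {κ : Type} [Fintype κ] (hd : m ≤ d) (dom : Set (Fin n → ℝ))
    (f : (Fin n → ℝ) → (Fin m → ℝ)) (p : Fin d ⊕ κ → MvPolynomial (Fin d ⊕ κ) ℝ)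
    (q : Fin d ⊕ κ → MvPolynomial (Fin n) ℝ) (Ω : ℝ → ℝ → ℝ) (hΩ : IsPolyFun2 Ω)
    (H : ∀ x ∈ dom, ∃ y : ℝ → (Fin d ⊕ κ) → ℝ, y 0 = gEval q x ∧
      (∀ t : ℝ, 0 ≤ t → HasDerivAt y (gEval p (y t)) t) ∧
      (∀ t : ℝ, 0 ≤ t → ∀ μ : ℝ, 0 ≤ μ → Ω ‖x‖ μ ≤ (∫ s in (0:ℝ)..t, ‖gEval p (y s)‖) →
        ‖(fun i : Fin m => y t (Sum.inl (Fin.castLE hd i))) - f x‖ ≤ Real.exp (-μ)) ∧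
      (∀ t : ℝ, 0 ≤ t → t ≤ ∫ s in (0:ℝ)..t, ‖gEval p (y s)‖)) : AP dom f := by
  set e : Fin d ⊕ κ ≃ Fin (d + Fintype.card κ) :=
    (Equiv.sumCongr (Equiv.refl _) (Fintype.equivFin κ)).trans finSumFinEquiv with he
  have he1 : ∀ i : Fin m, e.symm (Fin.castLE (hd.trans (Nat.le_add_right d _)) i) =
      Sum.inl (Fin.castLE hd i) := by
    intro i
    rw [Equiv.symm_apply_eq]
    simp only [he, Equiv.trans_apply, Equiv.sumCongr_apply, Sum.map_inl, Equiv.refl_apply,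
      finSumFinEquiv_apply_left]
    rfl
  refine ⟨d + Fintype.card κ, hd.trans (Nat.le_add_right d _), reP e p, q ∘ e.symm, Ω, hΩ,
    fun x hx => ?_⟩
  obtain ⟨y, hy0, hy, h1, h2⟩ := H x hx
  have hp : ∀ s, pEval (reP e p) (y s ∘ e.symm) = gEval p (y s) ∘ e.symm :=
    fun s => gEval_reP e p (y s)
  have hlen : ∀ t, pLen (reP e p) (fun t => y t ∘ e.symm) t =
      ∫ s in (0:ℝ)..t, ‖gEval p (y s)‖ := by
    intro t
    simp only [pLen, hp, norm_comp_equiv]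
  refine ⟨fun t => y t ∘ e.symm, ?_, ?_, ?_, ?_⟩
  · simp only [hy0]; rfl
  · intro t ht
    simp only [hp]
    exact hasDerivAt_comp_equiv _ (hy t ht)
  · intro t ht μ hμ hle
    rw [hlen] at hle
    have := h1 t ht μ hμ hle
    simpa only [Function.comp_apply, he1] using this
  · intro t ht
    rw [hlen]; exact h2 t ht

theorem AWP_of_sum {n m d : ℕ} {κ : Type} [Fintype κ] (hd : m ≤ d) (dom : Set (Fin n → ℝ))
    (f : (Fin n → ℝ) → (Fin m → ℝ)) (p : Fin d ⊕ κ → MvPolynomial (Fin d ⊕ κ) ℝ)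
    (q : Fin d ⊕ κ → MvPolynomial (Fin (n+1)) ℝ) (Ω : ℝ → ℝ → ℝ) (hΩ : IsPolyFun2 Ω)
    (Υ : ℝ → ℝ → ℝ → ℝ) (hΥ : IsPolyFun3 Υ)
    (H : ∀ x ∈ dom, ∀ μ : ℝ, 0 ≤ μ → ∃ y : ℝ → (Fin d ⊕ κ) → ℝ, y 0 = gEval q (Fin.snoc x μ) ∧
      (∀ t : ℝ, 0 ≤ t → HasDerivAt y (gEval p (y t)) t) ∧
      (∀ t : ℝ, 0 ≤ t → Ω ‖x‖ μ ≤ t →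
        ‖(fun i : Fin m => y t (Sum.inl (Fin.castLE hd i))) - f x‖ ≤ Real.exp (-μ)) ∧
      (∀ t : ℝ, 0 ≤ t → ‖y t‖ ≤ Υ ‖x‖ μ t)) : AWP dom f := by
  set e : Fin d ⊕ κ ≃ Fin (d + Fintype.card κ) :=
    (Equiv.sumCongr (Equiv.refl _) (Fintype.equivFin κ)).trans finSumFinEquiv with he
  have he1 : ∀ i : Fin m, e.symm (Fin.castLE (hd.trans (Nat.le_add_right d _)) i) =
      Sum.inl (Fin.castLE hd i) := by
    intro i
    rw [Equiv.symm_apply_eq]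
    simp only [he, Equiv.trans_apply, Equiv.sumCongr_apply, Sum.map_inl, Equiv.refl_apply,
      finSumFinEquiv_apply_left]
    rfl
  refine ⟨Ω, Υ, hΩ, hΥ, d + Fintype.card κ, hd.trans (Nat.le_add_right d _), reP e p,
    q ∘ e.symm, fun x hx μ hμ => ?_⟩
  obtain ⟨y, hy0, hy, h1, h2⟩ := H x hx μ hμ
  have hp : ∀ s, pEval (reP e p) (y s ∘ e.symm) = gEval p (y s) ∘ e.symm :=
    fun s => gEval_reP e p (y s)
  refine ⟨fun t => y t ∘ e.symm, ?_, ?_, ?_, ?_⟩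
  · simp only [hy0]; rfl
  · intro t ht
    simp only [hp]
    exact hasDerivAt_comp_equiv _ (hy t ht)
  · intro t ht hle
    have := h1 t ht hle
    simpa only [Function.comp_apply, he1] using this
  · intro t ht
    rw [norm_comp_equiv]; exact h2 t ht

end

section

theorem pow_sum_le {S : ℝ} (hS : 2 ≤ S) (a b : ℕ) : S ^ a + S ^ b ≤ S ^ (a + b + 1) := by
  have h1 : S ^ a ≤ S ^ (a+b) := pow_le_pow_right₀ (by linarith) (by omega)
  have h2 : S ^ b ≤ S ^ (a+b) := pow_le_pow_right₀ (by linarith) (by omega)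
  have h3 : 0 < S ^ (a+b) := pow_pos (by linarith) _
  rw [pow_succ]; nlinarith

open MvPolynomial in
theorem hasDerivAt_eval_s10 {d : ℕ} (P : MvPolynomial (Fin d) ℝ) {y : ℝ → Fin d → ℝ} {y' : Fin d → ℝ}
    {t : ℝ} (h : HasDerivAt y y' t) :
    HasDerivAt (fun t => eval (y t) P) (∑ i, eval (y t) (pderiv i P) * y' i) t := by
  induction P using MvPolynomial.induction_on with
  | C r => simpa using hasDerivAt_const t r
  | add p q hp hq =>
    have := hp.add hq
    simp only [map_add]
    refine this.congr_deriv ?_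
    rw [← Finset.sum_add_distrib]
    exact Finset.sum_congr rfl fun i _ => by ring
  | mul_X p i hp =>
    have := hp.mul (hasDerivAt_pi.1 h i)
    simp only [map_mul, eval_X]
    refine this.congr_deriv ?_
    simp only [Derivation.leibniz, pderiv_X, smul_eq_mul, map_add, map_mul, eval_X, add_mul,
      Finset.sum_add_distrib]
    rw [add_comm]
    congr 1
    · rw [Finset.sum_eq_single i]
      · simp
      · intro b _ hb; simp [hb.symm]
      · simp
    · rw [Finset.sum_mul]
      exact Finset.sum_congr rfl fun j _ => by ring

/-- time change -/
theorem time_change {h : ℝ → ℝ} (hc : Continuous h) (h1 : ∀ t, 1 ≤ h t) :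
    ∃ τ : ℝ → ℝ, (∀ t, HasDerivAt τ (1 / h (τ t)) t) ∧ τ 0 = 0 ∧ (∀ t, 0 ≤ t → 0 ≤ τ t) ∧
      ∀ t, ∫ s in (0:ℝ)..τ t, h s = t := by
  set θ : ℝ → ℝ := fun u => ∫ s in (0:ℝ)..u, h s with hθ
  have hd : ∀ t, HasDerivAt θ (h t) t := hasDerivAt_int hc 0
  have hmono : StrictMono θ := strictMono_of_hasDerivAt_pos hd fun t => by linarith [h1 t]
  have hθc : Continuous θ := continuous_iff_continuousAt.2 fun t => (hd t).continuousAt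
  have hge : Monotone (fun t => θ t - t) := by
    refine monotone_of_deriv_nonneg (fun t => ((hd t).sub (hasDerivAt_id t)).differentiableAt) fun t => ?_
    have hd' : HasDerivAt (fun t => θ t - t) (h t - 1) t := (hd t).sub (hasDerivAt_id t)
    rw [hd'.deriv]; linarith [h1 t]
  have hθ0 : θ 0 = 0 := by simp [hθ]
  have hsurj : Function.Surjective θ := by
    refine hθc.surjective ?_ ?_
    · refine Filter.tendsto_atTop_mono' _ ?_ Filter.tendsto_id
      filter_upwards [Filter.eventually_ge_atTop 0] with t ht
      have := hge ht
      simp only [hθ0, id] at this ⊢; linarith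
    · refine Filter.tendsto_atBot_mono' _ ?_ Filter.tendsto_id
      filter_upwards [Filter.eventually_le_atBot 0] with t ht
      have := hge ht
      simp only [hθ0, id] at this ⊢; linarith
  set e := hmono.orderIsoOfSurjective θ hsurj
  have he : ∀ t, θ (e.symm t) = t := fun t => e.apply_symm_apply t
  refine ⟨e.symm, fun t => ?_, ?_, fun t ht => ?_, he⟩
  · rw [one_div]
    exact HasDerivAt.of_local_left_inverse e.symm.continuous.continuousAt (hd _)
      (by linarith [h1 (e.symm t)]) (Filter.Eventually.of_forall he)
  · apply hmono.injective; rw [he, hθ0]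
  · by_contra hlt
    push Not at hlt
    have := hmono hlt
    rw [he, hθ0] at this; linarith

open MvPolynomial in
/-- key facts for the slowed-down curve -/
theorem slow_curve {d : ℕ} (p : Fin d → MvPolynomial (Fin d) ℝ) (N a : MvPolynomial (Fin d) ℝ)
    (hN : N = 1 + ∑ i, p i ^ 2) (ha : a = ∑ i, pderiv i N * p i)
    (y : ℝ → Fin d → ℝ) (hy : ∀ t : ℝ, 0 ≤ t → HasDerivAt y (pEval p (y t)) t) :
    ∃ τ g : ℝ → ℝ, τ 0 = 0 ∧ g 0 = 1 ∧ (∀ t, 0 ≤ t → 0 ≤ τ t) ∧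
      (∀ t, 0 ≤ t → 0 ≤ g t ∧ g t ≤ 1) ∧
      (∀ t, 0 ≤ t → HasDerivAt τ (g t) t) ∧
      (∀ t, 0 ≤ t → HasDerivAt g (-(1 + (eval (y (τ t)) a) ^ 2) * g t ^ 3) t) ∧
      (∀ t, 0 ≤ t → ‖y t - y 0‖ ≤ pLen p y t) ∧
      (∀ s t, 0 ≤ s → s ≤ t → pLen p y s ≤ pLen p y t) ∧
      (∀ t, 0 ≤ t → pLen p y (τ t) ≤ (eval (y 0) N + 1) * t) ∧
      (∀ t, 0 ≤ t → ∀ V : ℝ, (∀ s, 0 ≤ s → s ≤ τ t → (eval (y s) a) ^ 2 ≤ V) →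
        t ≤ τ t * (1 + τ t * (1 + V))) := by
  set Y : ℝ → Fin d → ℝ := fun t => y (max t 0) with hY
  have hYy : ∀ t, 0 ≤ t → Y t = y t := fun t ht => by simp [hY, max_eq_left ht]
  have hYc : Continuous Y := by
    refine continuous_iff_continuousAt.2 fun t => ?_
    exact (hy _ (le_max_right t 0)).continuousAt.comp (f := fun t => max t 0) (by fun_prop)
  have hev : ∀ P : MvPolynomial (Fin d) ℝ, Continuous (fun t => eval (Y t) P) := fun P =>
    (MvPolynomial.continuous_eval P).comp hYc
  have hpc : Continuous (fun t => pEval p (Y t)) := (gEval_continuous p).comp hYc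
  set L : ℝ → ℝ := fun t => ∫ s in (0:ℝ)..t, ‖pEval p (Y s)‖ with hL
  have hLd : ∀ t, HasDerivAt L ‖pEval p (Y t)‖ t := hasDerivAt_int hpc.norm 0
  have hLp : ∀ t, 0 ≤ t → pLen p y t = L t := by
    intro t ht
    refine intervalIntegral.integral_congr fun s hs => ?_
    rw [Set.uIcc_of_le ht] at hs
    simp only [hYy s hs.1]
  set h : ℝ → ℝ := fun u => 1 + ∫ s in (0:ℝ)..u, (1 + (eval (Y s) a) ^ 2) with hh
  have hac := hev a
  have hhd : ∀ t, HasDerivAt h (1 + (eval (Y t) a) ^ 2) t := fun t =>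
    (hasDerivAt_int (g := fun s => 1 + (eval (Y s) a) ^ 2) (by fun_prop) 0 t).const_add 1
  have hhc : Continuous h := continuous_iff_continuousAt.2 fun t => (hhd t).continuousAt
  have hhm : Monotone h := by
    refine monotone_of_deriv_nonneg (fun t => (hhd t).differentiableAt) fun t => ?_
    rw [(hhd t).deriv]; positivity
  have hh0 : h 0 = 1 := by simp [hh]
  have hh1 : ∀ t, 0 ≤ t → 1 ≤ h t := fun t ht => hh0 ▸ hhm ht
  obtain ⟨τ, hτd, hτ0, hτn, hτi⟩ := time_change (h := fun t => h (max t 0)) (by fun_prop)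
    (fun t => hh1 _ (le_max_right _ _))
  have hNd : ∀ t, 0 ≤ t → HasDerivAt (fun t => eval (y t) N) (eval (Y t) a) t := by
    intro t ht
    refine (hasDerivAt_eval_s10 N (hy t ht)).congr_deriv ?_
    rw [ha, map_sum, hYy t ht]
    exact Finset.sum_congr rfl fun i _ => by rw [map_mul]; rfl
  have hNh : ∀ t, 0 ≤ t → eval (y t) N ≤ eval (y 0) N + h t := by
    intro t ht
    have := image_norm_le_of_norm_deriv_right_le_deriv_boundary
      (f := fun s => eval (y s) N - eval (y 0) N) (a := 0) (b := t) (B := h)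
      (fun s hs => ((hNd s hs.1).sub_const _).continuousAt.continuousWithinAt)
      (fun s hs => ((hNd s hs.1).sub_const _).hasDerivWithinAt) (by simp [hh0]) hhd
      (fun s hs => by
        rw [Real.norm_eq_abs, abs_le]
        constructor <;> nlinarith [sq_nonneg (eval (Y s) a + 1), sq_nonneg (eval (Y s) a - 1)]) ⟨ht, le_rfl⟩
    have := (le_abs_self _).trans this
    linarith
  have hpN : ∀ v, ‖pEval p v‖ ≤ eval v N := by
    intro v
    have hNv : eval v N = 1 + ∑ i, (eval v (p i)) ^ 2 := by rw [hN]; simp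
    have hpos : ∀ i, (eval v (p i)) ^ 2 ≤ ∑ i, (eval v (p i)) ^ 2 := fun i =>
      Finset.single_le_sum (f := fun i => (eval v (p i)) ^ 2) (fun _ _ => sq_nonneg _) (Finset.mem_univ i)
    have h0 : 0 ≤ ∑ i, (eval v (p i)) ^ 2 := Finset.sum_nonneg fun _ _ => sq_nonneg _
    refine (pi_norm_le_iff_of_nonneg (by rw [hNv]; linarith)).2 fun i => ?_
    rw [hNv, Real.norm_eq_abs, abs_le]
    have := hpos i
    change _ ≤ eval v (p i) ∧ eval v (p i) ≤ _
    constructor <;> nlinarith [sq_nonneg (eval v (p i) + 1), sq_nonneg (eval v (p i) - 1)]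
  have hmaxc : Continuous (fun s => h (max s 0)) := by fun_prop
  refine ⟨τ, fun t => 1 / h (τ t), hτ0, by simp [hτ0, hh0], hτn, fun t ht => ?_, fun t ht => ?_,
    fun t ht => ?_, fun t ht => ?_, fun s t hs hst => ?_, fun t ht => ?_, fun t ht V hV => ?_⟩
  · have := hh1 _ (hτn t ht)
    exact ⟨by positivity, by rw [div_le_one (by linarith)]; exact this⟩
  · have := hτd t
    rwa [max_eq_left (hτn t ht)] at this
  · have h1 := hh1 _ (hτn t ht)
    have h2 := hτd t
    rw [max_eq_left (hτn t ht)] at h2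
    have h3 := ((hhd (τ t)).comp t h2).inv (by simp only [Function.comp]; linarith)
    simp only [one_div]
    refine h3.congr_deriv ?_
    rw [hYy _ (hτn t ht)]
    have : h (τ t) ≠ 0 := by linarith
    simp only [Function.comp]
    field_simp
  · rw [hLp t ht]
    have := image_norm_le_of_norm_deriv_right_le_deriv_boundary
      (f := fun s => y s - y 0) (a := 0) (b := t) (B := L)
      (fun s hs => ((hy s hs.1).sub_const _).continuousAt.continuousWithinAt)
      (fun s hs => ((hy s hs.1).sub_const _).hasDerivWithinAt) (by simp [hL]) hLd
      (fun s hs => by rw [hYy s hs.1]) ⟨ht, le_rfl⟩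
    exact this
  · rw [hLp s hs, hLp t (hs.trans hst)]
    refine (monotone_of_deriv_nonneg (fun t => (hLd t).differentiableAt) fun t => ?_) hst
    rw [(hLd t).deriv]; positivity
  · rw [hLp _ (hτn t ht)]
    have h0 := hτn t ht
    have hN0 : 0 ≤ eval (y 0) N := (norm_nonneg _).trans (hpN _)
    have h1 : L (τ t) ≤ ∫ s in (0:ℝ)..τ t, (eval (y 0) N + h (max s 0)) := by
      refine intervalIntegral.integral_mono_on h0 (hpc.norm.intervalIntegrable _ _)
        ((by fun_prop : Continuous _).intervalIntegrable _ _) fun s hs => ?_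
      rw [hYy s hs.1, max_eq_left hs.1]
      exact (hpN _).trans (hNh s hs.1)
    rw [intervalIntegral.integral_add (by simp) (hmaxc.intervalIntegrable _ _), hτi,
      intervalIntegral.integral_const, smul_eq_mul, sub_zero] at h1
    have h2 : τ t ≤ t := by
      calc τ t = ∫ s in (0:ℝ)..τ t, (1:ℝ) := by simp
        _ ≤ ∫ s in (0:ℝ)..τ t, h (max s 0) := by
          refine intervalIntegral.integral_mono_on h0 (by simp)
            (hmaxc.intervalIntegrable _ _) fun s hs => hh1 _ (le_max_right _ _)
        _ = t := hτi t
    nlinarith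
  · have h0 := hτn t ht
    have h1 : h (τ t) ≤ 1 + τ t * (1 + V) := by
      have : ∫ s in (0:ℝ)..τ t, (1 + (eval (Y s) a) ^ 2) ≤ ∫ s in (0:ℝ)..τ t, (1 + V) := by
        refine intervalIntegral.integral_mono_on h0 ((by fun_prop : Continuous _).intervalIntegrable _ _)
          (by simp) fun s hs => ?_
        rw [hYy s hs.1]
        linarith [hV s hs.1 hs.2]
      simp only [intervalIntegral.integral_const, smul_eq_mul, sub_zero] at this
      simp only [hh]; linarith
    calc t = ∫ s in (0:ℝ)..τ t, h (max s 0) := (hτi t).symm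
      _ ≤ ∫ s in (0:ℝ)..τ t, h (τ t) := by
        refine intervalIntegral.integral_mono_on h0 (hmaxc.intervalIntegrable _ _) (by simp) fun s hs => ?_
        exact hhm (max_le hs.2 h0)
      _ = τ t * h (τ t) := by simp
      _ ≤ _ := by gcongr

open MvPolynomial in
theorem AP_imp_AWP {n m : ℕ} (dom : Set (Fin n → ℝ)) (f : (Fin n → ℝ) → (Fin m → ℝ))
    (H : AP dom f) : AWP dom f := by
  obtain ⟨d, hd, p, q, Ω, hΩ, H⟩ := H
  set N : MvPolynomial (Fin d) ℝ := 1 + ∑ i, p i ^ 2 with hN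
  set a : MvPolynomial (Fin d) ℝ := ∑ i, pderiv i N * p i with ha
  obtain ⟨c1, hc1⟩ := polyFun2_bound hΩ
  obtain ⟨c2, hc2⟩ := poly_bound q
  obtain ⟨c3, hc3⟩ := poly_bound1 a
  obtain ⟨c4, hc4⟩ := poly_bound1 N
  set V := c1 + c2 + 2 with hVdef
  set W := V * (c3 * 2) with hWdef
  set E1 := c1 + (0 + (c1 + (0 + W + 1)) + 1) with hE1
  set E2 := (c2 + 1) + (((c2 + 1) * c4 + 0 + 1) + 1) + 1 with hE2
  refine AWP_of_sum (κ := Unit) hd dom f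
    (Sum.elim (fun i => X (Sum.inr ()) * rename Sum.inl (p i))
      (fun _ => -(1 + (rename Sum.inl a) ^ 2) * X (Sum.inr ()) ^ 3))
    (Sum.elim (fun i => rename Fin.castSucc (q i)) (fun _ => 1))
    (fun u v => (2 + u + v) ^ (E1 + 1)) (isPolyFun2_pow 2 (by norm_num) _)
    (fun u v w => (2 + u + v + w) ^ E2) (isPolyFun3_pow 2 (by norm_num) _) ?_
  intro x hx μ hμ
  obtain ⟨y, hy0, hy, hyc, hyl⟩ := H x hx
  obtain ⟨τ, g, hτ0, hg0, hτn, hgb, hτd, hgd, hl1, hlm, hl2, hl3⟩ := slow_curve p N a hN ha y hy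
  have hxn := norm_nonneg x
  have hyq : y 0 = gEval q x := hy0
  refine ⟨fun t => Sum.elim (y (τ t)) (fun _ => g t), ?_, ?_, ?_, ?_⟩
  · ext i
    rcases i with i | i
    · simp only [Sum.elim_inl, hτ0, hy0, gEval, eval_rename]
      congr 2
      ext j; simp
    · simp [gEval, hg0]
  · intro t ht
    refine hasDerivAt_pi.2 fun i => ?_
    rcases i with i | i
    · have h1 := hasDerivAt_pi.1 ((hy (τ t) (hτn t ht)).scomp t (hτd t ht)) i
      refine h1.congr_deriv ?_
      simp [gEval, eval_rename, pEval]
    · simpa [gEval, eval_rename] using hgd t ht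
  · intro t ht hle
    refine hyc (τ t) (hτn t ht) μ hμ ?_
    by_contra hlt
    push Not at hlt
    set S := 2 + ‖x‖ + μ with hS
    have hS2 : 2 ≤ S := by linarith
    have hΩS : Ω ‖x‖ μ ≤ S ^ c1 := hc1 c1 le_rfl S hS2 _ _ hxn hμ (by linarith) (by linarith)
    have hτS : τ t ≤ S ^ c1 := (hyl _ (hτn t ht)).trans (hlt.le.trans hΩS)
    have hy0S : ‖y 0‖ ≤ S ^ c2 := by rw [hyq]; exact hc2 c2 le_rfl S hS2 x (by linarith)
    have hone : ∀ k : ℕ, 1 ≤ S ^ k := fun k => one_le_pow₀ (by linarith)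
    have hA : ∀ s, 0 ≤ s → s ≤ τ t → (eval (y s) a) ^ 2 ≤ S ^ W := by
      intro s hs hst
      have h1 : ‖y s‖ ≤ S ^ (c1 + c2 + 1) := by
        have h2 := hl1 s hs
        have h3 := hlm s (τ t) hs hst
        have h5 := pow_sum_le hS2 c1 c2
        have h6 := norm_le_insert' (y s) (y 0)
        linarith
      have h2 : ‖y s‖ ≤ S ^ V := h1.trans (pow_le_pow_right₀ (by linarith) (by omega))
      have h3 : 2 ≤ S ^ V := hS2.trans (le_self_pow₀ (by linarith) (by omega))
      have h4 := hc3 c3 le_rfl _ h3 _ h2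
      rw [← sq_abs]
      calc _ ≤ ((S ^ V) ^ c3) ^ 2 := by gcongr
        _ = S ^ W := by rw [← pow_mul, ← pow_mul, hWdef]
    have h5 := hl3 t ht _ hA
    have h6 : t ≤ S ^ E1 := by
      have hpos := hτn t ht
      have hS0 : 0 ≤ S := by linarith
      calc t ≤ τ t * (1 + τ t * (1 + S ^ W)) := h5
        _ ≤ S ^ c1 * (S ^ 0 + S ^ c1 * (S ^ 0 + S ^ W)) := by
          rw [pow_zero]; gcongr
        _ ≤ S ^ c1 * (S ^ 0 + S ^ c1 * S ^ (0 + W + 1)) := by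
          gcongr; exact pow_sum_le hS2 0 W
        _ = S ^ c1 * (S ^ 0 + S ^ (c1 + (0 + W + 1))) := by rw [← pow_add]
        _ ≤ S ^ c1 * S ^ (0 + (c1 + (0 + W + 1)) + 1) := by
          gcongr; exact pow_sum_le hS2 _ _
        _ = S ^ E1 := by rw [← pow_add]
    have h7 : S ^ E1 < S ^ (E1 + 1) := pow_lt_pow_right₀ (by linarith) (by omega)
    linarith
  · intro t ht
    set S := 2 + ‖x‖ + μ + t with hS
    have hS2 : 2 ≤ S := by linarith
    have hy0S : ‖y 0‖ ≤ S ^ (c2+1) := by rw [hyq]; exact hc2 (c2+1) (by omega) S hS2 x (by linarith)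
    have hN0 : eval (y 0) N ≤ S ^ ((c2+1) * c4) := by
      rw [pow_mul]
      exact (le_abs_self _).trans (hc4 c4 le_rfl _ (hS2.trans (le_self_pow₀ (by linarith) (by omega))) _ hy0S)
    have hbig : ‖y 0‖ + (eval (y 0) N + 1) * t ≤ S ^ E2 := by
      calc _ ≤ S ^ (c2+1) + (S ^ ((c2+1) * c4) + S ^ 0) * S := by
            rw [pow_zero]
            have : t ≤ S := by linarith
            gcongr
        _ ≤ S ^ (c2+1) + S ^ ((c2+1) * c4 + 0 + 1) * S := by
            gcongr; exact pow_sum_le hS2 _ _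
        _ = S ^ (c2+1) + S ^ ((c2+1) * c4 + 0 + 1 + 1) := by rw [← pow_succ]
        _ ≤ _ := pow_sum_le hS2 _ _
    refine (pi_norm_le_iff_of_nonneg (by positivity)).2 fun i => ?_
    rcases i with i | i
    · simp only [Sum.elim_inl]
      refine (norm_le_pi_norm (y (τ t)) i).trans ?_
      have h1 := hl1 _ (hτn t ht)
      have h2 := hl2 t ht
      have h3 := norm_le_insert' (y (τ t)) (y 0)
      linarith
    · simp only [Sum.elim_inr, Real.norm_eq_abs]
      rw [abs_of_nonneg (hgb t ht).1]
      exact (hgb t ht).2.trans (one_le_pow₀ (by linarith))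

end

section

theorem exp_win (A h : ℕ) : ∃ l0 : ℕ, ∀ l, l0 ≤ l → ∀ s : ℝ, 2 ≤ s →
    s ^ A * Real.exp (-(s ^ l / 4)) ≤ 1 / 32 * Real.exp (-(s ^ h)) := by
  refine ⟨h + A + 8, fun l hl s hs => ?_⟩
  have hs0 : 0 < s := by linarith
  have e1 : s ^ A ≤ Real.exp (A * s) := by
    rw [Real.exp_nat_mul]
    exact pow_le_pow_left₀ hs0.le (by linarith [Real.add_one_le_exp s]) A
  have e2 : (32:ℝ) ≤ Real.exp 5 := by
    have := pow_le_pow_left₀ (by norm_num) (show (2:ℝ) ≤ Real.exp 1 by linarith [Real.add_one_le_exp 1]) 5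
    rw [← Real.exp_nat_mul] at this
    norm_num at this; exact this
  have h1 : A * s + 5 + s ^ h ≤ s ^ l / 4 := by
    have k1 : s ^ (h + A + 8) ≤ s ^ l := pow_le_pow_right₀ (by linarith) hl
    have k2 : (A:ℝ) ≤ s ^ A := by
      have : A < 2 ^ A := Nat.lt_two_pow_self
      have h2 : (A:ℝ) ≤ 2 ^ A := by exact_mod_cast this.le
      exact h2.trans (pow_le_pow_left₀ (by norm_num) hs A)
    have k3 : (1:ℝ) ≤ s ^ h := one_le_pow₀ (by linarith)
    have k4 : (1:ℝ) ≤ s ^ A := one_le_pow₀ (by linarith)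
    have k5 : (128:ℝ) ≤ s ^ 7 := by
      have := pow_le_pow_left₀ (by norm_num) hs 7
      norm_num at this; exact this
    have k6 : s ^ (h + A + 8) = s ^ h * s ^ A * s * s ^ 7 := by ring
    have k7 : A * s ≤ s ^ h * s ^ A * s := by
      have : (A:ℝ) ≤ s ^ h * s ^ A := by nlinarith
      gcongr
    have k8 : s ^ h ≤ s ^ h * s ^ A * s := by nlinarith [mul_le_mul k4 hs (by norm_num) (by positivity)]
    have k9 : 2 ≤ s ^ h * s ^ A * s := by nlinarith [one_le_mul_of_one_le_of_one_le k3 k4]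
    have k10 : s ^ h * s ^ A * s * 128 ≤ s ^ h * s ^ A * s * s ^ 7 := by gcongr
    linarith
  calc s ^ A * Real.exp (-(s ^ l / 4)) ≤ Real.exp (A * s) * Real.exp (-(s ^ l / 4)) := by gcongr
    _ = Real.exp (A * s - s ^ l / 4) := by rw [← Real.exp_add]; ring_nf
    _ ≤ Real.exp (-5 - s ^ h) := Real.exp_le_exp.2 (by linarith)
    _ = (Real.exp 5)⁻¹ * Real.exp (-(s ^ h)) := by rw [← Real.exp_neg, ← Real.exp_add]; ring_nf
    _ ≤ _ := by
      gcongr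
      rw [one_div]
      exact inv_anti₀ (by norm_num) e2

/-- logistic pulse -/
def chi (R : ℝ) (j : ℕ) (φ t : ℝ) : ℝ :=
  1 / (1 + Real.exp (-((R + t) ^ j * t * (Real.cos (t - φ) - 3 / 4))))

def pulse (R : ℝ) (j : ℕ) (φ : ℝ) (e : ℕ) (t : ℝ) : ℝ := t * (R + t) ^ e * chi R j φ t

theorem chi_pos (R : ℝ) (j : ℕ) (φ t : ℝ) : 0 < chi R j φ t := by
  unfold chi; positivity

theorem chi_le_one (R : ℝ) (j : ℕ) (φ t : ℝ) : chi R j φ t ≤ 1 := by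
  unfold chi
  rw [div_le_one (by positivity)]
  linarith [Real.exp_pos (-((R + t) ^ j * t * (Real.cos (t - φ) - 3 / 4)))]

theorem chi_continuous (R : ℝ) (j : ℕ) (φ : ℝ) : Continuous (chi R j φ) := by
  unfold chi
  refine Continuous.div (by fun_prop) (by fun_prop) fun t => ?_
  positivity

theorem pulse_continuous (R : ℝ) (j : ℕ) (φ : ℝ) (e : ℕ) : Continuous (pulse R j φ e) := by
  have := chi_continuous R j φ
  unfold pulse; fun_prop

theorem chi_zero (R : ℝ) (j : ℕ) (φ : ℝ) : chi R j φ 0 = 1 / 2 := by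
  simp [chi]; norm_num

theorem chi_off {R : ℝ} (hR : 2 ≤ R) (j : ℕ) {φ t : ℝ} (ht : 0 ≤ t) (hc : Real.cos (t - φ) ≤ 1 / 2) :
    chi R j φ t ≤ Real.exp (-((R + t) ^ j * t / 4)) := by
  unfold chi
  have h0 : 0 ≤ (R + t) ^ j * t := by positivity
  rw [Real.exp_neg ((R + t) ^ j * t / 4), one_div]
  refine inv_anti₀ (Real.exp_pos _) ?_
  have : Real.exp ((R + t) ^ j * t / 4) ≤ Real.exp (-((R + t) ^ j * t * (Real.cos (t - φ) - 3 / 4))) :=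
    Real.exp_le_exp.2 (by nlinarith)
  linarith

theorem chi_on {R : ℝ} (hR : 2 ≤ R) (j : ℕ) {φ t : ℝ} (ht : 0 ≤ t) (hc : 3 / 4 ≤ Real.cos (t - φ)) :
    1 / 2 ≤ chi R j φ t := by
  unfold chi
  have h0 : 0 ≤ (R + t) ^ j * t * (Real.cos (t - φ) - 3 / 4) :=
    mul_nonneg (by positivity) (by linarith)
  have : Real.exp (-((R + t) ^ j * t * (Real.cos (t - φ) - 3 / 4))) ≤ 1 := Real.exp_le_one_iff.2 (by linarith)
  refine one_div_le_one_div_of_le (by positivity) (by linarith)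

theorem pulse_nonneg {R : ℝ} (hR : 2 ≤ R) (j : ℕ) (φ : ℝ) (e : ℕ) {t : ℝ} (ht : 0 ≤ t) :
    0 ≤ pulse R j φ e t := by
  have := chi_pos R j φ t
  unfold pulse; positivity

theorem pulse_le {R : ℝ} (hR : 2 ≤ R) (j : ℕ) (φ : ℝ) (e : ℕ) {t : ℝ} (ht : 0 ≤ t) :
    pulse R j φ e t ≤ (R + t) ^ (e + 1) := by
  have h1 := chi_le_one R j φ t
  have h2 := chi_pos R j φ t
  unfold pulse
  calc t * (R + t) ^ e * chi R j φ t ≤ (R + t) * (R + t) ^ e * 1 := by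
        have : t ≤ R + t := by linarith
        gcongr
    _ = _ := by ring

theorem pulse_off {R : ℝ} (hR : 2 ≤ R) (j : ℕ) {φ : ℝ} {e l : ℕ} (hel : e ≤ l) {t s : ℝ} (hs2 : 2 ≤ s)
    (ht : 1 ≤ t) (hs : s ≤ R + t)
    (hs4 : R + t ≤ s ^ 4) (hc : Real.cos (t - φ) ≤ 1 / 2) :
    pulse R j φ e t ≤ s ^ (4 * (l + 1)) * Real.exp (-(s ^ j / 4)) := by
  have h1 := chi_off hR j (by linarith) hc
  have h2 := chi_pos R j φ t
  have h4 : Real.exp (-((R + t) ^ j * t / 4)) ≤ Real.exp (-(s ^ j / 4)) := by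
    refine Real.exp_le_exp.2 ?_
    have h5 : s ^ j ≤ (R + t) ^ j := pow_le_pow_left₀ (by linarith) hs j
    have h6 : 0 ≤ s ^ j := by positivity
    nlinarith
  unfold pulse
  calc t * (R + t) ^ e * chi R j φ t ≤ (R + t) * (R + t) ^ e * Real.exp (-(s ^ j / 4)) := by
        have : t ≤ R + t := by linarith
        have := h1.trans h4
        gcongr
    _ = (R + t) ^ (e + 1) * Real.exp (-(s ^ j / 4)) := by ring
    _ ≤ (R + t) ^ (l + 1) * Real.exp (-(s ^ j / 4)) := by
        gcongr; linarith
    _ ≤ (s ^ 4) ^ (l + 1) * Real.exp (-(s ^ j / 4)) := by gcongr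
    _ = _ := by rw [← pow_mul]

theorem pulse_on {R : ℝ} (hR : 2 ≤ R) (j : ℕ) {φ : ℝ} {e : ℕ} {t s : ℝ} (hs0 : 0 ≤ s)
    (ht : 1 ≤ t) (hs : s ≤ R + t) (hc : 3 / 4 ≤ Real.cos (t - φ)) :
    s ^ e / 2 ≤ pulse R j φ e t := by
  have h1 := chi_on hR j (by linarith) hc
  unfold pulse
  calc s ^ e / 2 = 1 * s ^ e * (1 / 2) := by ring
    _ ≤ _ := by gcongr

theorem cos_off {u : ℝ} (h1 : Real.pi / 3 ≤ u) (h2 : u ≤ 5 * Real.pi / 3) : Real.cos u ≤ 1 / 2 := by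
  have hpi := Real.pi_pos
  rw [← Real.cos_pi_div_three]
  rcases le_total u Real.pi with h | h
  · exact Real.cos_le_cos_of_nonneg_of_le_pi (by linarith) h h1
  · rw [← Real.cos_two_pi_sub u]
    exact Real.cos_le_cos_of_nonneg_of_le_pi (by linarith) (by linarith) (by linarith)

theorem cos_on {u : ℝ} (h : |u| ≤ 1 / 2) : 3 / 4 ≤ Real.cos u := by
  have := Real.one_sub_sq_div_two_le_cos (x := u)
  have h2 : u ^ 2 ≤ (1/2)^2 := sq_le_sq' (by linarith [(abs_le.1 h).1]) (abs_le.1 h).2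
  norm_num at h2; linarith

/-- lower bound for the integral of a nonnegative function over an interval containing a unit window -/
theorem int_window {g : ℝ → ℝ} (hg : Continuous g) {t0 t1 w b : ℝ} (h0 : t0 ≤ w - 1 / 2) (h1 : w + 1 / 2 ≤ t1)
    (hn : ∀ t ∈ Set.Icc t0 t1, 0 ≤ g t) (hb : ∀ t, |t - w| ≤ 1 / 2 → b ≤ g t) :
    b ≤ ∫ s in t0..t1, g s := by
  have hi : ∀ a b : ℝ, IntervalIntegrable g MeasureTheory.volume a b := fun a b => hg.intervalIntegrable _ _
  rw [← intervalIntegral.integral_add_adjacent_intervals (hi t0 (w - 1/2)) (hi (w - 1/2) t1),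
    ← intervalIntegral.integral_add_adjacent_intervals (hi (w - 1/2) (w + 1/2)) (hi (w + 1/2) t1)]
  have e1 : 0 ≤ ∫ s in t0..(w - 1/2), g s :=
    intervalIntegral.integral_nonneg h0 fun u hu => hn u ⟨hu.1, by linarith [hu.2]⟩
  have e2 : 0 ≤ ∫ s in (w + 1/2)..t1, g s :=
    intervalIntegral.integral_nonneg h1 fun u hu => hn u ⟨by linarith [hu.1], hu.2⟩
  have e3 : ∫ s in (w - 1/2)..(w + 1/2), b ≤ ∫ s in (w - 1/2)..(w + 1/2), g s :=
    intervalIntegral.integral_mono_on (by linarith) (by simp) (hi _ _) fun u hu =>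
      hb u (abs_le.2 ⟨by linarith [hu.1], by linarith [hu.2]⟩)
  rw [intervalIntegral.integral_const, smul_eq_mul] at e3
  ring_nf at e3
  ring_nf at e1 e2 ⊢
  linarith

/-- coordinatewise clamp -/
def cl {d : ℕ} (M : ℝ) (u : Fin d → ℝ) : Fin d → ℝ := fun i => max (-M) (min M (u i))

theorem cl_norm {d : ℕ} {M : ℝ} (hM : 0 ≤ M) (u : Fin d → ℝ) : ‖cl M u‖ ≤ M := by
  refine (pi_norm_le_iff_of_nonneg hM).2 fun i => ?_
  rw [Real.norm_eq_abs, abs_le]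
  exact ⟨le_max_left _ _, max_le (by linarith) (min_le_left _ _)⟩

theorem cl_eq {d : ℕ} {M : ℝ} {u : Fin d → ℝ} (h : ‖u‖ ≤ M) : cl M u = u := by
  ext i
  have := (norm_le_pi_norm u i).trans h
  rw [Real.norm_eq_abs, abs_le] at this
  simp [cl, this.1, this.2]

theorem cl_lip {d : ℕ} (M : ℝ) (u v : Fin d → ℝ) : ‖cl M u - cl M v‖ ≤ ‖u - v‖ := by
  refine (pi_norm_le_iff_of_nonneg (norm_nonneg _)).2 fun i => ?_
  refine le_trans ?_ (norm_le_pi_norm (u - v) i)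
  simp only [cl, Pi.sub_apply, Real.norm_eq_abs]
  refine (abs_max_sub_max_le_max _ _ _ _).trans (max_le (by simp) ?_)
  exact (abs_min_sub_min_le_max _ _ _ _).trans (max_le (by simp) le_rfl)

theorem cl_continuous {d : ℕ} {M : ℝ → ℝ} (hM : Continuous M) {u : ℝ → Fin d → ℝ} (hu : Continuous u) :
    Continuous fun t => cl (M t) (u t) := by
  refine continuous_pi fun i => ?_
  unfold cl
  fun_prop

theorem exp_sub_one_le (x : ℝ) : Real.exp x - 1 ≤ x * Real.exp x := by
  have h := Real.add_one_le_exp (-x)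
  have : Real.exp x * Real.exp (-x) = 1 := by rw [← Real.exp_add]; simp
  nlinarith [Real.exp_pos x]

open Set in
theorem cycle_y {E : Type*} [NormedAddCommGroup E] [NormedSpace ℝ E]
    {α β : ℝ → ℝ} (hβc : Continuous β) {G : ℝ → E → E} {Q y z : ℝ → E} {t0 t1 t3 κ P η B M0 Λ K : ℝ}
    (h01 : t0 ≤ t1) (h01' : t1 - t0 ≤ 3) (h13' : t3 - t1 ≤ 5)
    (hα0 : ∀ t ∈ Icc t0 t3, 0 ≤ α t) (hβ0 : ∀ t ∈ Icc t0 t3, 0 ≤ β t) (h13 : t1 ≤ t3)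
    (hκ : 0 ≤ κ) (hP : 0 ≤ P) (hη0 : 0 ≤ η) (hM0 : 0 ≤ M0) (hK : 0 < K) (hΛ : 0 < Λ)
    (hG : ∀ t ∈ Icc t0 t1, ∀ u, ‖G t u‖ ≤ P)
    (hGL : ∀ t ∈ Icc t1 t3, ∀ u v, ‖G t u - G t v‖ ≤ K * ‖u - v‖)
    (hy : ∀ t ∈ Icc t0 t3, HasDerivAt y (α t • G t (y t) + β t • (Q t - y t)) t)
    (hακ : ∀ t ∈ Icc t0 t1, α t ≤ κ) (hη : ∀ t ∈ Icc t0 t1, ‖Q t - Q t1‖ ≤ η)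
    (hB : B ≤ ∫ s in t0..t1, β s)
    (hβκ : ∀ t ∈ Icc t1 t3, β t ≤ κ) (hQ : ∀ t ∈ Icc t1 t3, ‖Q t‖ ≤ M0)
    (hαΛ : ∀ t ∈ Icc t1 t3, α t ≤ Λ)
    (hz : ∀ t ∈ Icc t1 t3, HasDerivAt z (α t • G t (z t)) t) (hzM : ∀ t ∈ Icc t1 t3, ‖z t‖ ≤ M0)
    (hz1 : z t1 = Q t1) :
    ∀ t ∈ Icc t1 t3, ‖y t - z t‖ ≤
      (Real.exp (-B) * (‖y t0‖ + ‖Q t1‖) + η + 3 * (κ * P) + 10 * (κ * M0)) *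
        Real.exp (5 * (Λ * K + κ)) := by
  have hδ : ‖y t1 - z t1‖ ≤ Real.exp (-B) * (‖y t0‖ + ‖Q t1‖) + η + 3 * (κ * P) := by
    have h1 := relax hβc (u := y) (g := Q) (e := fun t => α t • G t (y t)) (c := Q t1) (t0 := t0) (t1 := t1)
      (η := η) (ε := κ * P) (fun t ht => hy t ⟨ht.1, ht.2.trans h13⟩)
      (fun t ht => hβ0 t ⟨ht.1, ht.2.trans h13⟩) hη
      (fun t ht => by
        rw [norm_smul, Real.norm_eq_abs, abs_of_nonneg (hα0 t ⟨ht.1, ht.2.trans h13⟩)]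
        exact mul_le_mul (hακ t ht) (hG t ht _) (norm_nonneg _) hκ) t1 ⟨h01, le_rfl⟩
    rw [hz1]
    have h2 : Real.exp (-∫ s in t0..t1, β s) ≤ Real.exp (-B) := Real.exp_le_exp.2 (by linarith)
    have h3 : ‖y t0 - Q t1‖ ≤ ‖y t0‖ + ‖Q t1‖ := norm_sub_le _ _
    have h4 : Real.exp (-∫ s in t0..t1, β s) * ‖y t0 - Q t1‖ ≤ Real.exp (-B) * (‖y t0‖ + ‖Q t1‖) := by gcongr
    have h5 : (1 - Real.exp (-∫ s in t0..t1, β s)) * η ≤ η := by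
      nlinarith [Real.exp_pos (-∫ s in t0..t1, β s)]
    have h6 : κ * P * (t1 - t0) ≤ κ * P * 3 := by gcongr
    linarith
  set D := Real.exp (-B) * (‖y t0‖ + ‖Q t1‖) + η + 3 * (κ * P) with hD
  set L := Λ * K + κ with hL
  have hL0 : 0 < L := by positivity
  have key := dist_le_of_approx_trajectories_ODE_of_mem (v := fun t u => α t • G t u + β t • (Q t - u))
    (s := fun _ => univ)
    (K := L.toNNReal) (f := y) (g := z) (f' := fun t => α t • G t (y t) + β t • (Q t - y t))
    (g' := fun t => α t • G t (z t)) (a := t1) (b := t3) (εf := 0) (εg := κ * (2 * M0)) (δ := D)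
    (fun t ht => by
      have ht' : t ∈ Icc t1 t3 := ⟨ht.1, ht.2.le⟩
      have ha0 := hα0 t ⟨h01.trans ht.1, ht.2.le⟩
      have hb0 := hβ0 t ⟨h01.trans ht.1, ht.2.le⟩
      refine LipschitzOnWith.of_dist_le_mul fun u _ v _ => ?_
      rw [dist_eq_norm, dist_eq_norm, Real.coe_toNNReal _ hL0.le]
      have e : α t • G t u + β t • (Q t - u) - (α t • G t v + β t • (Q t - v))
        = α t • (G t u - G t v) - β t • (u - v) := by
        simp only [smul_sub]; abel
      rw [e]
      refine (norm_sub_le _ _).trans ?_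
      rw [norm_smul, norm_smul, Real.norm_eq_abs, Real.norm_eq_abs, abs_of_nonneg ha0, abs_of_nonneg hb0,
        hL, add_mul, mul_assoc]
      have h1 := hGL t ht' u v
      have h2 := hαΛ t ht'
      have h3 := hβκ t ht'
      gcongr)
    (fun t ht => (hy t ⟨h01.trans ht.1, ht.2⟩).continuousAt.continuousWithinAt)
    (fun t ht => (hy t ⟨h01.trans ht.1, ht.2.le⟩).hasDerivWithinAt)
    (fun t ht => by simp) (fun _ _ => mem_univ _)
    (fun t ht => (hz t ht).continuousAt.continuousWithinAt)
    (fun t ht => (hz t ⟨ht.1, ht.2.le⟩).hasDerivWithinAt)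
    (fun t ht => by
      have ht' : t ∈ Icc t1 t3 := ⟨ht.1, ht.2.le⟩
      have hb0 := hβ0 t ⟨h01.trans ht.1, ht.2.le⟩
      rw [dist_eq_norm, sub_add_cancel_left, norm_neg, norm_smul, Real.norm_eq_abs, abs_of_nonneg hb0]
      have h1 : ‖Q t - z t‖ ≤ 2 * M0 := (norm_sub_le _ _).trans (by linarith [hQ t ht', hzM t ht'])
      have h3 := hβκ t ht'
      gcongr)
    (fun _ _ => mem_univ _) (by rw [dist_eq_norm]; exact hδ)
  intro t ht
  have h1 := key t ht
  rw [dist_eq_norm, Real.coe_toNNReal _ hL0.le, gronwallBound_of_K_ne_0 hL0.ne', zero_add] at h1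
  simp only at h1
  refine h1.trans ?_
  have ht5 : t - t1 ≤ 5 := by linarith [ht.2]
  have ht0 : 0 ≤ t - t1 := by linarith [ht.1]
  have h2 := exp_sub_one_le (L * (t - t1))
  have hD0 : 0 ≤ D := (norm_nonneg _).trans hδ
  have h3 : κ * (2 * M0) / L * (Real.exp (L * (t - t1)) - 1) ≤
      κ * (2 * M0) / L * (L * (t - t1) * Real.exp (L * (t - t1))) := by gcongr
  have h4 : κ * (2 * M0) / L * (L * (t - t1) * Real.exp (L * (t - t1))) =
      κ * (2 * M0) * (t - t1) * Real.exp (L * (t - t1)) := by field_simp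
  have h5 : Real.exp (L * (t - t1)) ≤ Real.exp (5 * L) := Real.exp_le_exp.2 (by nlinarith)
  calc _ ≤ (D + κ * (2 * M0) * (t - t1)) * Real.exp (L * (t - t1)) := by linarith
    _ ≤ (D + κ * (2 * M0) * 5) * Real.exp (5 * L) := by gcongr
    _ = _ := by ring

end

section

def bb (c : ℕ) : ℕ := c * (c + 5)
def aa (c : ℕ) : ℕ := bb c + 3
def NN (c : ℕ) : ℕ := 4 * (aa c * c) + 4 * aa c + 4 * c + 20

def kap (l j : ℕ) (s : ℝ) : ℝ := s ^ (4 * (l + 1)) * Real.exp (-(s ^ j / 4))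

/-- constraints on the exponents -/
structure Cons (c l j : ℕ) : Prop where
  C1 : ∀ s : ℝ, 2 ≤ s → s ^ NN c * Real.exp (-(s ^ l / 2)) ≤ 1 / 32 * Real.exp (-(s ^ (NN c + 4)))
  C2 : ∀ s : ℝ, 2 ≤ s → s ^ NN c * kap l j s ≤ 1 / 32 * Real.exp (-(s ^ (NN c + 4)))
  C3 : c + 1 + aa c * c + 2 ≤ j
  C4 : c + 1 ≤ l

theorem con_exist (c : ℕ) : ∃ l j, Cons c l j := by
  obtain ⟨l0, hl⟩ := exp_win (NN c) (NN c + 4)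
  set l := l0 + c + 1 with hld
  obtain ⟨j0, hj⟩ := exp_win (NN c + 4 * (l + 1)) (NN c + 4)
  refine ⟨l, j0 + (c + 1 + aa c * c + 2), ⟨fun s hs => ?_, fun s hs => ?_, by omega, by omega⟩⟩
  · refine le_trans ?_ (hl l (by omega) s hs)
    have : 0 ≤ s ^ l := by positivity
    gcongr
    norm_num
  · have := hj (j0 + (c + 1 + aa c * c + 2)) (by omega) s hs
    rwa [pow_add, mul_assoc] at this

/-- data for a fixed input -/
structure Dat {d m : ℕ} (c : ℕ) (R : ℝ) (p : (Fin d → ℝ) → Fin d → ℝ) (Qf : ℝ → Fin d → ℝ)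
    (Z : ℝ → ℝ → Fin d → ℝ) (pr : (Fin d → ℝ) → Fin m → ℝ) (fx : Fin m → ℝ) : Prop where
  c1 : 1 ≤ c
  R2 : 2 ≤ R
  pc : Continuous p
  Qc : Continuous Qf
  prc : Continuous pr
  H1 : ∀ S, R ≤ S → ∀ v, ‖v‖ ≤ S → ‖p v‖ ≤ S ^ c
  H2 : ∀ S, R ≤ S → ∀ v w, ‖v‖ ≤ S → ‖w‖ ≤ S → ‖p v - p w‖ ≤ S ^ c * ‖v - w‖
  H3 : ∀ S, R ≤ S → ∀ μ, 0 ≤ μ → μ ≤ S → ‖Qf μ‖ ≤ S ^ c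
  H4 : ∀ S, R ≤ S → ∀ μ ν, 0 ≤ μ → μ ≤ S → 0 ≤ ν → ν ≤ S → ‖Qf μ - Qf ν‖ ≤ S ^ c * |μ - ν|
  H5 : ∀ S, R ≤ S → ∀ μ τ, 0 ≤ μ → μ ≤ S → 0 ≤ τ → τ ≤ S → ‖Z μ τ‖ ≤ S ^ c
  H6 : ∀ μ, 0 ≤ μ → Z μ 0 = Qf μ
  H6' : ∀ μ, 0 ≤ μ → ∀ τ, 0 ≤ τ → HasDerivAt (Z μ) (p (Z μ τ)) τ
  H7 : ∀ S, R ≤ S → ∀ μ τ, 0 ≤ μ → μ ≤ S → S ^ c ≤ τ → ‖pr (Z μ τ) - fx‖ ≤ Real.exp (-μ)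
  P1 : ∀ u v, ‖pr u - pr v‖ ≤ ‖u - v‖
  P2 : ∀ u, ‖pr u‖ ≤ ‖u‖

def pA (c j : ℕ) (R t : ℝ) : ℝ := pulse R j (4 * Real.pi / 3) (c + 1) t
def pB (l j : ℕ) (R t : ℝ) : ℝ := pulse R j (2 * Real.pi / 3) l t
def pG (l j : ℕ) (R t : ℝ) : ℝ := pulse R j 0 l t

/-- solution of the (clamped) system -/
structure Sol {d m : ℕ} (c l j : ℕ) (R : ℝ) (p : (Fin d → ℝ) → Fin d → ℝ) (Qf : ℝ → Fin d → ℝ)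
    (pr : (Fin d → ℝ) → Fin m → ℝ) (y : ℝ → Fin d → ℝ) (mu : ℝ → ℝ) (out : ℝ → Fin m → ℝ) : Prop where
  y0 : y 0 = Qf 0
  m0 : mu 0 = 0
  o0 : out 0 = 0
  hy : ∀ t, HasDerivAt y (pA c j R t • p (cl ((R + |t|) ^ aa c) (y t)) + pB l j R t • (Qf (mu t) - y t)) t
  hm : ∀ t, HasDerivAt mu (pG l j R t • (t - mu t)) t
  ho : ∀ t, HasDerivAt out (pG l j R t • (pr (y t) - out t)) t

section
variable {d m : ℕ} {c l j : ℕ} {R : ℝ} {p : (Fin d → ℝ) → Fin d → ℝ} {Qf : ℝ → Fin d → ℝ}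
    {Z : ℝ → ℝ → Fin d → ℝ} {pr : (Fin d → ℝ) → Fin m → ℝ} {fx : Fin m → ℝ}
    {y : ℝ → Fin d → ℝ} {mu : ℝ → ℝ} {out : ℝ → Fin m → ℝ}

theorem Dat.clb (H : Dat c R p Qf Z pr fx) {S : ℝ} (hS : R ≤ S) (u : Fin d → ℝ) :
    ‖p (cl (S ^ aa c) u)‖ ≤ S ^ (aa c * c) := by
  have hR := H.R2
  have hS0 : 0 < S := by linarith
  rw [pow_mul]
  refine H.H1 _ (hS.trans (le_self_pow₀ (by linarith) (by simp [aa]))) _ (cl_norm (by positivity) _)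

theorem Dat.cll (H : Dat c R p Qf Z pr fx) {S : ℝ} (hS : R ≤ S) (u v : Fin d → ℝ) :
    ‖p (cl (S ^ aa c) u) - p (cl (S ^ aa c) v)‖ ≤ S ^ (aa c * c) * ‖u - v‖ := by
  have hR := H.R2
  have hS0 : 0 < S := by linarith
  rw [pow_mul]
  refine (H.H2 _ (hS.trans (le_self_pow₀ (by linarith) (by simp [aa]))) _ _ (cl_norm (by positivity) _)
    (cl_norm (by positivity) _)).trans ?_
  have := cl_lip (S ^ aa c) u v
  gcongr

theorem sol_exist (H : Dat c R p Qf Z pr fx) (l j : ℕ) : ∃ y mu out, Sol c l j R p Qf pr y mu out := by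
  have hA : Continuous (pA c j R) := pulse_continuous _ _ _ _
  have hB : Continuous (pB l j R) := pulse_continuous _ _ _ _
  have hG : Continuous (pG l j R) := pulse_continuous _ _ _ _
  have hR := H.R2
  obtain ⟨mu, hm0, hm⟩ := lin_exist hG continuous_id
  have hmc : Continuous mu := continuous_iff_continuousAt.2 fun t => (hm t).continuousAt
  have hQ := H.Qc
  have hAb : ∀ T : ℝ, ∃ C : NNReal, ∀ t ∈ Set.Icc (-T) T, ‖pA c j R t‖ * (R + |t|) ^ (aa c * c) ≤ C := by
    intro T
    have hcont : Continuous fun t => ‖pA c j R t‖ * (R + |t|) ^ (aa c * c) := by fun_prop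
    obtain ⟨C, hC⟩ := (isCompact_Icc (a := -T) (b := T)).bddAbove_image hcont.continuousOn
    exact ⟨C.toNNReal, fun t ht => (hC ⟨t, ht, rfl⟩).trans (Real.le_coe_toNNReal C)⟩
  obtain ⟨y, hy0, hy⟩ := semilin_exist (fun t u => pA c j R t • p (cl ((R + |t|) ^ aa c) u))
    (fun u hu => by
      have := H.pc.comp (cl_continuous (M := fun t => (R + |t|) ^ aa c) (by fun_prop) hu)
      exact hA.smul this)
    (fun T => by
      obtain ⟨C, hC⟩ := hAb T
      refine ⟨C, fun t ht => LipschitzWith.of_dist_le_mul fun u v => ?_⟩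
      rw [dist_eq_norm, dist_eq_norm, ← smul_sub, norm_smul]
      have h1 := H.cll (S := R + |t|) (by linarith [abs_nonneg t]) u v
      calc _ ≤ ‖pA c j R t‖ * ((R + |t|) ^ (aa c * c) * ‖u - v‖) := by gcongr
        _ ≤ _ := by rw [← mul_assoc]; exact mul_le_mul_of_nonneg_right (hC t ht) (norm_nonneg _))
    (fun T => by
      obtain ⟨C, hC⟩ := hAb T
      refine ⟨C, fun t ht u => ?_⟩
      rw [norm_smul]
      have h1 := H.clb (S := R + |t|) (by linarith [abs_nonneg t]) u
      exact (mul_le_mul_of_nonneg_left h1 (norm_nonneg _)).trans (hC t ht))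
    hB (hQ.comp hmc) (Qf 0)
  have hyc : Continuous y := continuous_iff_continuousAt.2 fun t => (hy t).continuousAt
  obtain ⟨out, ho0, ho⟩ := lin_exist hG (H.prc.comp hyc)
  exact ⟨y, mu, out, hy0, hm0, ho0, hy, hm, ho⟩

theorem pA_cont : Continuous (pA c j R) := pulse_continuous _ _ _ _
theorem pB_cont : Continuous (pB l j R) := pulse_continuous _ _ _ _
theorem pG_cont : Continuous (pG l j R) := pulse_continuous _ _ _ _

open Set

theorem mu_bounds (hR : 2 ≤ R) (Y : Sol c l j R p Qf pr y mu out) {t : ℝ} (ht : 0 ≤ t) :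
    0 ≤ mu t ∧ mu t ≤ t := by
  have h := relax (β := pG l j R) pG_cont (u := mu) (g := id) (e := fun _ => 0) (c := t / 2) (t0 := 0) (t1 := t)
    (η := t / 2) (ε := 0) (fun s _ => by simpa using Y.hm s) (fun s hs => pulse_nonneg hR _ _ _ hs.1)
    (fun s hs => by
      rw [Real.norm_eq_abs, abs_le]; simp only [id]
      exact ⟨by linarith [hs.1], by linarith [hs.2]⟩) (fun _ _ => by simp) t ⟨ht, le_rfl⟩
  rw [Y.m0, zero_sub, norm_neg, Real.norm_eq_abs, Real.norm_eq_abs, abs_of_nonneg (by linarith : 0 ≤ t / 2)] at h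
  have h2 : |mu t - t / 2| ≤ t / 2 := by linarith
  rw [abs_le] at h2
  constructor <;> linarith

theorem mu_mono (hR : 2 ≤ R) (Y : Sol c l j R p Qf pr y mu out) : MonotoneOn mu (Ici 0) := by
  refine monotoneOn_of_deriv_nonneg (convex_Ici 0)
    (fun t _ => (Y.hm t).continuousAt.continuousWithinAt)
    (fun t _ => (Y.hm t).differentiableAt.differentiableWithinAt) fun t ht => ?_
  rw [interior_Ici] at ht
  rw [(Y.hm t).deriv, smul_eq_mul]
  exact mul_nonneg (pulse_nonneg hR _ _ _ (le_of_lt ht)) (by linarith [(mu_bounds hR Y (le_of_lt ht)).2])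

theorem pow_two_sum {S : ℝ} (hS : 2 ≤ S) {a b e : ℕ} (ha : a ≤ b) (hb : b + 2 ≤ e) :
    S ^ b + S ^ a + 1 ≤ S ^ e := by
  have h1 : S ^ a ≤ S ^ b := pow_le_pow_right₀ (by linarith) ha
  have h2 : 1 ≤ S ^ b := one_le_pow₀ (by linarith)
  have h3 : S ^ (b + 2) ≤ S ^ e := pow_le_pow_right₀ (by linarith) hb
  have h4 : S ^ (b + 2) = S ^ b * (S * S) := by ring
  nlinarith [mul_le_mul hS hS (by norm_num) (by linarith)]

theorem pre (H : Dat c R p Qf Z pr fx) (C : Cons c l j) (Y : Sol c l j R p Qf pr y mu out) {t : ℝ}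
    (ht : 0 ≤ t) (ht2 : t ≤ Real.pi / 3) : ‖y t‖ ≤ (R + t) ^ (bb c + 1) := by
  have hR := H.R2
  have hpi := Real.pi_pos
  have hc := H.c1
  have hpi4 := Real.pi_le_four
  have h := relax (β := pB l j R) pB_cont (u := y) (g := fun s => Qf (mu s))
    (e := fun s => pA c j R s • p (cl ((R + |s|) ^ aa c) (y s))) (c := 0) (t0 := 0) (t1 := t)
    (η := (R + t) ^ c) (ε := 1) (fun s _ => Y.hy s) (fun s hs => pulse_nonneg hR _ _ _ hs.1)
    (fun s hs => by
      have hmb := mu_bounds hR Y hs.1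
      rw [sub_zero]
      exact H.H3 _ (by linarith) _ hmb.1 (by linarith [hs.2]))
    (fun s hs => by
      rw [norm_smul, Real.norm_eq_abs, abs_of_nonneg (show 0 ≤ pA c j R s from pulse_nonneg hR _ _ _ hs.1), abs_of_nonneg hs.1]
      have h1 := H.clb (S := R + s) (by linarith [hs.1]) (y s)
      have hcos : Real.cos (s - 4 * Real.pi / 3) ≤ 1 / 2 := by
        rw [← Real.cos_add_two_pi]
        exact cos_off (by linarith [hs.1]) (by linarith [hs.2])
      have h2 := chi_off hR j hs.1 hcos
      have hS : 2 ≤ R + s := by linarith [hs.1]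
      have hS0 : 0 < R + s := by linarith
      have hs0 := hs.1
      have h3 : s * Real.exp (-((R + s) ^ j * s / 4)) ≤ 4 / (R + s) ^ j := by
        have h4 := Real.add_one_le_exp ((R + s) ^ j * s / 4)
        rw [Real.exp_neg, ← div_eq_mul_inv, div_le_div_iff₀ (Real.exp_pos _) (by positivity)]
        nlinarith
      have h5 : pA c j R s ≤ (R + s) ^ (c + 1) * (4 / (R + s) ^ j) := by
        unfold pA pulse
        calc _ = (R + s) ^ (c + 1) * (s * chi R j (4 * Real.pi / 3) s) := by ring
          _ ≤ (R + s) ^ (c + 1) * (s * Real.exp (-((R + s) ^ j * s / 4))) := by gcongr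
          _ ≤ _ := by gcongr
      calc _ ≤ (R + s) ^ (c + 1) * (4 / (R + s) ^ j) * (R + s) ^ (aa c * c) := by gcongr
        _ = (4 * (R + s) ^ (c + 1 + aa c * c)) / (R + s) ^ j := by rw [pow_add _ (c+1)]; ring
        _ ≤ 1 := by
          rw [div_le_one (by positivity)]
          refine le_trans ?_ (pow_le_pow_right₀ (by linarith) C.C3)
          rw [pow_add _ (c + 1 + aa c * c), mul_comm]
          gcongr
          nlinarith) t ⟨ht, le_rfl⟩
  rw [sub_zero, sub_zero, Y.y0] at h
  have h0 : ‖Qf 0‖ ≤ (R + t) ^ c := H.H3 _ (by linarith) _ le_rfl (by linarith)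
  have hI : 0 ≤ ∫ s in (0:ℝ)..t, pB l j R s :=
    intervalIntegral.integral_nonneg ht fun u hu => pulse_nonneg hR _ _ _ hu.1
  have hE : Real.exp (-∫ s in (0:ℝ)..t, pB l j R s) ≤ 1 := Real.exp_le_one_iff.2 (by linarith)
  have hE0 := Real.exp_pos (-∫ s in (0:ℝ)..t, pB l j R s)
  set X := Real.exp (-∫ s in (0:ℝ)..t, pB l j R s)
  have h6 : X * ‖Qf 0‖ + (1 - X) * (R + t) ^ c ≤ (R + t) ^ c := by nlinarith
  have h7 : (R + t) ^ c + (R + t) ^ c + 1 ≤ (R + t) ^ (bb c + 1) :=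
    pow_two_sum (by linarith) le_rfl (by unfold bb; nlinarith)
  have h8 : 2 ≤ (R + t) ^ c := le_trans (by linarith) (le_self_pow₀ (by linarith) (by omega))
  linarith
end

end

section

open Set

section
variable {d m : ℕ} {c l j : ℕ} {R : ℝ} {p : (Fin d → ℝ) → Fin d → ℝ} {Qf : ℝ → Fin d → ℝ}
    {Z : ℝ → ℝ → Fin d → ℝ} {pr : (Fin d → ℝ) → Fin m → ℝ} {fx : Fin m → ℝ}
    {y : ℝ → Fin d → ℝ} {mu : ℝ → ℝ} {out : ℝ → Fin m → ℝ}

/-- start of the cycle -/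
def TT (k : ℕ) : ℝ := k * (2 * Real.pi)

theorem TT_nonneg (k : ℕ) : 0 ≤ TT k := by have := Real.pi_pos; unfold TT; positivity
theorem TT_succ (k : ℕ) : TT (k + 1) = TT k + 2 * Real.pi := by unfold TT; push_cast; ring
theorem cos_TT (k : ℕ) (t φ : ℝ) : Real.cos (t - φ) = Real.cos (t - TT k - φ) := by
  rw [← Real.cos_sub_nat_mul_two_pi (t - φ) k]; unfold TT; congr 1; ring

def ss (R : ℝ) (k : ℕ) : ℝ := R + (TT k + Real.pi / 3)

theorem ss_ge (hR : 2 ≤ R) (k : ℕ) : 3 ≤ ss R k := by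
  have := TT_nonneg k; have := Real.pi_gt_three; unfold ss; linarith

theorem ss_four (hR : 2 ≤ R) {k : ℕ} {t : ℝ} (h : t ≤ TT k + 7 * Real.pi / 3) : R + t ≤ ss R k ^ 4 := by
  have h1 := ss_ge hR k
  have h2 := Real.pi_lt_d2
  have h3 : R + t ≤ ss R k + 7 := by unfold ss; linarith
  have h4 : 3 ^ 3 ≤ ss R k ^ 3 := pow_le_pow_left₀ (by norm_num) h1 3
  have h5 : ss R k ^ 4 = ss R k ^ 3 * ss R k := by ring
  nlinarith

theorem ss_pow (hR : 2 ≤ R) {k : ℕ} {t : ℝ} (h0 : 0 ≤ t) (h : t ≤ TT k + 7 * Real.pi / 3) {e N : ℕ} (he : 4 * e ≤ N) :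
    (R + t) ^ e ≤ ss R k ^ N := by
  have h1 := ss_ge hR k
  calc (R + t) ^ e ≤ (ss R k ^ 4) ^ e := pow_le_pow_left₀ (by linarith) (ss_four hR h) e
    _ = ss R k ^ (4 * e) := by rw [← pow_mul]
    _ ≤ _ := pow_le_pow_right₀ (by linarith) he

theorem off_gen (hR : 2 ≤ R) {e : ℕ} (hel : e ≤ l) {φ : ℝ} {k : ℕ} {t : ℝ} (h1 : TT k + Real.pi / 3 ≤ t)
    (h2 : t ≤ TT k + 7 * Real.pi / 3) (hc : Real.cos (t - TT k - φ) ≤ 1 / 2) :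
    pulse R j φ e t ≤ kap l j (ss R k) := by
  have h3 := ss_ge hR k
  have := TT_nonneg k; have := Real.pi_gt_three
  refine pulse_off hR j hel (by linarith) (by linarith) (by unfold ss; linarith) (ss_four hR h2) ?_
  rwa [cos_TT k]

theorem pA_off1 (hR : 2 ≤ R) (C : Cons c l j) {k : ℕ} {t : ℝ} (h1 : TT k + Real.pi / 3 ≤ t)
    (h2 : t ≤ TT k + Real.pi) : pA c j R t ≤ kap l j (ss R k) := by
  have := Real.pi_pos
  refine off_gen hR C.C4 h1 (by linarith) ?_
  rw [← Real.cos_add_two_pi]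
  exact cos_off (by linarith) (by linarith)

theorem pB_off (hR : 2 ≤ R) {k : ℕ} {t : ℝ} (h1 : TT k + Real.pi ≤ t)
    (h2 : t ≤ TT k + 7 * Real.pi / 3) : pB l j R t ≤ kap l j (ss R k) := by
  have := Real.pi_pos
  exact off_gen hR le_rfl (by linarith) h2 (cos_off (by linarith) (by linarith))

theorem pG_off (hR : 2 ≤ R) {k : ℕ} {t : ℝ} (h1 : TT k + Real.pi / 3 ≤ t)
    (h2 : t ≤ TT k + 5 * Real.pi / 3) : pG l j R t ≤ kap l j (ss R k) := by
  have := Real.pi_pos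
  exact off_gen hR le_rfl (by linarith) (by linarith) (cos_off (by linarith) (by linarith))

theorem int_B (hR : 2 ≤ R) (k : ℕ) :
    ss R k ^ l / 2 ≤ ∫ t in (TT k + Real.pi / 3)..(TT k + Real.pi), pB l j R t := by
  have := TT_nonneg k; have hpi := Real.pi_gt_three
  have h3 := ss_ge hR k
  refine int_window pB_cont (w := TT k + 2 * Real.pi / 3) (by linarith) (by linarith)
    (fun t ht => pulse_nonneg hR _ _ _ (by linarith [ht.1])) fun t ht => ?_
  have ht' := abs_le.1 ht
  refine pulse_on hR j (by linarith) (by linarith) (by unfold ss; linarith) ?_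
  rw [cos_TT k]
  exact cos_on (by convert ht using 2; ring)

theorem int_G (hR : 2 ≤ R) (k : ℕ) :
    ss R k ^ l / 2 ≤ ∫ t in (TT k + 5 * Real.pi / 3)..(TT k + 7 * Real.pi / 3), pG l j R t := by
  have := TT_nonneg k; have hpi := Real.pi_gt_three
  have h3 := ss_ge hR k
  refine int_window pG_cont (w := TT k + 2 * Real.pi) (by linarith) (by linarith)
    (fun t ht => pulse_nonneg hR _ _ _ (by linarith [ht.1])) fun t ht => ?_
  have ht' := abs_le.1 ht
  refine pulse_on hR j (by linarith) (by linarith) (by unfold ss; linarith) ?_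
  rw [cos_TT (k+1), TT_succ]
  exact cos_on (by convert ht using 2; ring)

theorem int_A (hR : 2 ≤ R) (k : ℕ) {t : ℝ} (ht : TT k + 5 * Real.pi / 3 ≤ t) :
    (R + (TT k + Real.pi)) ^ c ≤ ∫ t in (TT k + Real.pi)..t, pA c j R t := by
  have := TT_nonneg k; have hpi := Real.pi_gt_three
  have h1 : (R + (TT k + Real.pi)) ^ (c + 1) / 2 ≤ ∫ t in (TT k + Real.pi)..t, pA c j R t := by
    refine int_window pA_cont (w := TT k + 4 * Real.pi / 3) (by linarith) (by linarith)
      (fun t ht => pulse_nonneg hR _ _ _ (by linarith [ht.1])) fun t ht => ?_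
    have ht' := abs_le.1 ht
    refine pulse_on hR j (by linarith) (by linarith) (by linarith) ?_
    rw [cos_TT k]
    exact cos_on (by convert ht using 2; ring)
  refine le_trans ?_ h1
  rw [pow_succ]
  have : 0 < (R + (TT k + Real.pi)) ^ c := by positivity
  nlinarith

theorem kap_nonneg {s : ℝ} (hs : 0 ≤ s) : 0 ≤ kap l j s := by unfold kap; positivity

theorem err_num (C : Cons c l j) {s : ℝ} (hs : 3 ≤ s) : kap l j s ≤ 1 ∧
    (2 * (s ^ NN c * Real.exp (-(s ^ l / 2))) + 16 * (s ^ NN c * kap l j s)) *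
      Real.exp (5 * (s ^ NN c + kap l j s)) ≤ Real.exp (-s) ∧
    s ^ NN c * Real.exp (-(s ^ l / 2)) ≤ Real.exp (-s) / 32 ∧ s ^ NN c * kap l j s ≤ Real.exp (-s) / 32 := by
  have h1 := C.C1 s (by linarith)
  have h2 := C.C2 s (by linarith)
  have hk0 : 0 ≤ kap l j s := kap_nonneg (by linarith)
  have hN1 : s ≤ s ^ NN c := le_self_pow₀ (by linarith) (by simp [NN])
  have h4 : s ^ (NN c + 4) = s ^ NN c * s ^ 4 := pow_add _ _ _
  have h5 : (81:ℝ) ≤ s ^ 4 := by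
    have := pow_le_pow_left₀ (by norm_num) hs 4
    norm_num at this; exact this
  have h6 : s ^ NN c * 81 ≤ s ^ (NN c + 4) := by rw [h4]; gcongr
  have hE : Real.exp (-(s ^ (NN c + 4))) ≤ Real.exp (-s) := Real.exp_le_exp.2 (by linarith)
  have hE1 : Real.exp (-s) ≤ 1 := Real.exp_le_one_iff.2 (by linarith)
  have hE0 := Real.exp_pos (-(s ^ (NN c + 4)))
  have hk1 : kap l j s ≤ 1 := by nlinarith
  refine ⟨hk1, ?_, by linarith, by linarith⟩
  calc _ ≤ Real.exp (-(s ^ (NN c + 4))) * Real.exp (5 * (s ^ NN c + 1)) := by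
        gcongr
        linarith
    _ = Real.exp (-(s ^ (NN c + 4)) + 5 * (s ^ NN c + 1)) := by rw [Real.exp_add]
    _ ≤ _ := Real.exp_le_exp.2 (by linarith)

theorem mu_drift (H : Dat c R p Qf Z pr fx) (Y : Sol c l j R p Qf pr y mu out) {k : ℕ} {t : ℝ}
    (h1 : TT k + Real.pi / 3 ≤ t) (h2 : t ≤ TT k + Real.pi) :
    |mu t - mu (TT k + Real.pi)| ≤ 3 * (ss R k ^ 4 * kap l j (ss R k)) := by
  have hR := H.R2
  have := TT_nonneg k; have hpi := Real.pi_gt_three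
  have hpi2 := Real.pi_lt_d2
  have hs := ss_ge hR k
  have hk0 : 0 ≤ kap l j (ss R k) := kap_nonneg (by linarith)
  have h := Convex.norm_image_sub_le_of_norm_hasDerivWithin_le (f := mu)
    (f' := fun t => pG l j R t • (t - mu t)) (s := Icc (TT k + Real.pi / 3) (TT k + Real.pi))
    (C := ss R k ^ 4 * kap l j (ss R k)) (x := TT k + Real.pi) (y := t)
    (fun u _ => (Y.hm u).hasDerivWithinAt)
    (fun u hu => by
      have hu0 : 0 ≤ u := by linarith [hu.1]
      have hb := mu_bounds hR Y hu0
      rw [norm_smul, Real.norm_eq_abs, Real.norm_eq_abs, abs_of_nonneg (by linarith : 0 ≤ u - mu u),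
        abs_of_nonneg (show 0 ≤ pG l j R u from pulse_nonneg hR _ _ _ hu0), mul_comm]
      have e1 : pG l j R u ≤ kap l j (ss R k) := pG_off hR hu.1 (by linarith [hu.2])
      have e2 : u - mu u ≤ ss R k ^ 4 := by
        have := ss_four hR (k := k) (t := u) (by linarith [hu.2]); linarith
      have e3 : 0 ≤ pG l j R u := pulse_nonneg hR _ _ _ hu0
      gcongr) (convex_Icc _ _) ⟨by linarith, le_rfl⟩ ⟨h1, h2⟩
  rw [Real.norm_eq_abs, Real.norm_eq_abs] at h
  refine h.trans ?_
  have : |t - (TT k + Real.pi)| ≤ 3 := by rw [abs_le]; constructor <;> linarith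
  rw [mul_comm]
  gcongr
end

end

section

open Set

section
variable {d m : ℕ} {c l j : ℕ} {R : ℝ} {p : (Fin d → ℝ) → Fin d → ℝ} {Qf : ℝ → Fin d → ℝ}
    {Z : ℝ → ℝ → Fin d → ℝ} {pr : (Fin d → ℝ) → Fin m → ℝ} {fx : Fin m → ℝ}
    {y : ℝ → Fin d → ℝ} {mu : ℝ → ℝ} {out : ℝ → Fin m → ℝ}

def zz (c j : ℕ) (R : ℝ) (Z : ℝ → ℝ → Fin d → ℝ) (mu : ℝ → ℝ) (k : ℕ) (t : ℝ) : Fin d → ℝ :=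
  Z (mu (TT k + Real.pi)) (∫ s in (TT k + Real.pi)..t, pA c j R s)

theorem intA_nonneg (hR : 2 ≤ R) {k : ℕ} {t : ℝ} (h1 : TT k + Real.pi ≤ t) :
    0 ≤ ∫ s in (TT k + Real.pi)..t, pA c j R s :=
  intervalIntegral.integral_nonneg h1 fun u hu => pulse_nonneg hR _ _ _
    (by linarith [hu.1, TT_nonneg k, Real.pi_pos])

theorem zz_bound (H : Dat c R p Qf Z pr fx) (Y : Sol c l j R p Qf pr y mu out) {k : ℕ} {t : ℝ}
    (h1 : TT k + Real.pi ≤ t) (h2 : t ≤ TT k + 7 * Real.pi / 3) : ‖zz c j R Z mu k t‖ ≤ (R + t) ^ bb c := by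
  have hR := H.R2
  have hT := TT_nonneg k; have hpi := Real.pi_gt_three
  have hpi2 := Real.pi_lt_d2
  have hS : 2 ≤ R + t := by linarith
  have hint : ∫ s in (TT k + Real.pi)..t, pA c j R s ≤ (R + t) ^ (c + 5) := by
    calc _ ≤ ∫ s in (TT k + Real.pi)..t, (R + t) ^ (c + 2) := by
          refine intervalIntegral.integral_mono_on h1 (pA_cont.intervalIntegrable _ _) (by simp) fun u hu => ?_
          have hu0 : 0 ≤ u := by linarith [hu.1]
          exact (pulse_le hR _ _ _ hu0).trans (pow_le_pow_left₀ (by linarith) (by linarith [hu.2]) _)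
      _ = (t - (TT k + Real.pi)) * (R + t) ^ (c + 2) := by simp
      _ ≤ (R + t) ^ 3 * (R + t) ^ (c + 2) := by
          gcongr
          have := pow_le_pow_left₀ (by norm_num) hS 3
          linarith
      _ = _ := by ring
  have hm := mu_bounds hR Y (t := TT k + Real.pi) (by linarith)
  have hSS : R + t ≤ (R + t) ^ (c + 5) := le_self_pow₀ (by linarith) (by omega)
  have := H.H5 ((R + t) ^ (c + 5)) (by linarith) (mu (TT k + Real.pi)) _ hm.1 (by linarith)
    (intA_nonneg (c := c) (j := j) hR h1) hint
  rw [← pow_mul] at this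
  rw [bb, mul_comm c]
  exact this

theorem near (H : Dat c R p Qf Z pr fx) (C : Cons c l j) (Y : Sol c l j R p Qf pr y mu out) (k : ℕ)
    (hinv : ‖y (TT k + Real.pi / 3)‖ ≤ ss R k ^ (bb c + 1)) :
    ∀ t ∈ Icc (TT k + Real.pi) (TT k + 7 * Real.pi / 3),
      ‖y t - zz c j R Z mu k t‖ ≤ Real.exp (-ss R k) := by
  have hR := H.R2
  have hT := TT_nonneg k; have hpi := Real.pi_gt_three
  have hpi2 := Real.pi_lt_d2
  set s := ss R k with hs
  have hs3 : 3 ≤ s := ss_ge hR k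
  have hs0 : 0 ≤ s := by linarith
  set κ := kap l j s with hκ
  have hk0 : 0 ≤ κ := kap_nonneg hs0
  obtain ⟨e1, e2, -, -⟩ := err_num C hs3
  have hac : aa c ≤ NN c := by unfold NN; omega
  intro t ht
  have hpw : ∀ {a b : ℕ}, a ≤ b → s ^ a ≤ s ^ b := fun h => pow_le_pow_right₀ (by linarith) h
  have key := cycle_y (α := pA c j R) (β := pB l j R) pB_cont (G := fun t u => p (cl ((R + |t|) ^ aa c) u))
    (Q := fun t => Qf (mu t)) (y := y) (z := zz c j R Z mu k) (t0 := TT k + Real.pi / 3)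
    (t1 := TT k + Real.pi) (t3 := TT k + 7 * Real.pi / 3) (κ := κ) (P := s ^ (4 * (aa c * c)))
    (η := s ^ (4 * c) * (3 * (s ^ 4 * κ))) (B := s ^ l / 2) (M0 := s ^ (4 * aa c)) (Λ := s ^ (4 * (c + 2)))
    (K := s ^ (4 * (aa c * c))) (by linarith) (by linarith) (by linarith)
    (fun u hu => pulse_nonneg hR _ _ _ (by linarith [hu.1]))
    (fun u hu => pulse_nonneg hR _ _ _ (by linarith [hu.1])) (by linarith) hk0 (by positivity)
    (by positivity) (by positivity) (by positivity) (by positivity)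
    (fun u hu v => by
      have hu0 : 0 ≤ u := by linarith [hu.1]
      rw [abs_of_nonneg hu0]
      exact (H.clb (by linarith) v).trans (ss_pow hR hu0 (by linarith [hu.2]) le_rfl))
    (fun u hu v w => by
      have hu0 : 0 ≤ u := by linarith [hu.1]
      simp only [abs_of_nonneg hu0]
      refine (H.cll (by linarith) v w).trans ?_
      have := ss_pow hR (e := aa c * c) hu0 hu.2 le_rfl
      gcongr)
    (fun u _ => Y.hy u)
    (fun u hu => pA_off1 hR C hu.1 hu.2)
    (fun u hu => by
      have hu0 : 0 ≤ u := by linarith [hu.1]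
      have hb1 := mu_bounds hR Y hu0
      have hb2 := mu_bounds hR Y (t := TT k + Real.pi) (by linarith)
      have h1 := mu_drift H Y hu.1 hu.2
      have h2 := H.H4 (R + (TT k + Real.pi)) (by linarith) _ _ hb1.1 (by linarith [hu.2]) hb2.1 (by linarith)
      refine h2.trans ?_
      have h3 := ss_pow hR (k := k) (t := TT k + Real.pi) (e := c) (by linarith) (by linarith) le_rfl
      gcongr)
    (int_B hR k) (fun u hu => pB_off hR hu.1 hu.2)
    (fun u hu => by
      have hu0 : 0 ≤ u := by linarith [hu.1]
      have hb1 := mu_bounds hR Y hu0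
      refine (H.H3 (R + u) (by linarith) _ hb1.1 (by linarith)).trans (ss_pow hR hu0 hu.2 ?_)
      have := H.c1
      unfold aa bb; nlinarith)
    (fun u hu => by
      have hu0 : 0 ≤ u := by linarith [hu.1]
      exact (pulse_le hR _ _ _ hu0).trans (ss_pow hR hu0 hu.2 le_rfl))
    (fun u hu => by
      have hu0 : 0 ≤ u := by linarith [hu.1]
      have hb2 := mu_bounds hR Y (t := TT k + Real.pi) (by linarith)
      have hz := zz_bound H Y hu.1 hu.2
      rw [abs_of_nonneg hu0, cl_eq (hz.trans (pow_le_pow_right₀ (by linarith) (by unfold aa; omega)))]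
      exact (H.H6' _ hb2.1 _ (intA_nonneg hR hu.1)).scomp u (hasDerivAt_int pA_cont _ u))
    (fun u hu => by
      have hu0 : 0 ≤ u := by linarith [hu.1]
      exact (zz_bound H Y hu.1 hu.2).trans (ss_pow hR hu0 hu.2 (by unfold aa; omega)))
    (by
      have hb2 := mu_bounds hR Y (t := TT k + Real.pi) (by linarith)
      simp [zz, H.H6 _ hb2.1])
    t ht
  refine key.trans (le_trans ?_ e2)
  have hQ1 : ‖Qf (mu (TT k + Real.pi))‖ ≤ s ^ NN c := by
    have hb1 := mu_bounds hR Y (t := TT k + Real.pi) (by linarith)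
    refine (H.H3 (R + (TT k + Real.pi)) (by linarith) _ hb1.1 (by linarith)).trans
      (ss_pow hR (by linarith) (by linarith) ?_)
    unfold NN; omega
  have hy1 : ‖y (TT k + Real.pi / 3)‖ ≤ s ^ NN c := hinv.trans (hpw (by unfold NN aa; omega))
  have hη1 : s ^ (4 * c) * (3 * (s ^ 4 * κ)) ≤ 3 * (s ^ NN c * κ) := by
    have : s ^ (4 * c) * s ^ 4 ≤ s ^ NN c := by rw [← pow_add]; exact hpw (by unfold NN; omega)
    nlinarith
  have hP1 : s ^ (4 * (aa c * c)) ≤ s ^ NN c := hpw (by unfold NN; omega)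
  have hM1 : s ^ (4 * aa c) ≤ s ^ NN c := hpw (by unfold NN; omega)
  have hL1 : s ^ (4 * (c + 2)) * s ^ (4 * (aa c * c)) ≤ s ^ NN c := by
    rw [← pow_add]; exact hpw (by unfold NN; omega)
  have hX : Real.exp (-(s ^ l / 2)) * (‖y (TT k + Real.pi / 3)‖ + ‖Qf (mu (TT k + Real.pi))‖) ≤
      2 * (s ^ NN c * Real.exp (-(s ^ l / 2))) := by
    nlinarith [Real.exp_pos (-(s ^ l / 2))]
  have hP2 : κ * s ^ (4 * (aa c * c)) ≤ s ^ NN c * κ := by rw [mul_comm]; gcongr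
  have hM2 : κ * s ^ (4 * aa c) ≤ s ^ NN c * κ := by rw [mul_comm]; gcongr
  rw [← hκ]
  exact mul_le_mul (by linarith) (Real.exp_le_exp.2 (by linarith)) (Real.exp_pos _).le (by positivity)
end

end

section

open Set

section
variable {d m : ℕ} {c l j : ℕ} {R : ℝ} {p : (Fin d → ℝ) → Fin d → ℝ} {Qf : ℝ → Fin d → ℝ}
    {Z : ℝ → ℝ → Fin d → ℝ} {pr : (Fin d → ℝ) → Fin m → ℝ} {fx : Fin m → ℝ}
    {y : ℝ → Fin d → ℝ} {mu : ℝ → ℝ} {out : ℝ → Fin m → ℝ}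

theorem t3_eq (k : ℕ) : TT k + 7 * Real.pi / 3 = TT (k + 1) + Real.pi / 3 := by rw [TT_succ]; ring

theorem step_late (H : Dat c R p Qf Z pr fx) (C : Cons c l j) (Y : Sol c l j R p Qf pr y mu out) (k : ℕ)
    (hinv : ‖y (TT k + Real.pi / 3)‖ ≤ ss R k ^ (bb c + 1)) :
    ∀ t ∈ Icc (TT k + Real.pi) (TT k + 7 * Real.pi / 3), ‖y t‖ ≤ (R + t) ^ (bb c + 1) := by
  intro t ht
  have hR := H.R2
  have hT := TT_nonneg k; have hpi := Real.pi_gt_three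
  have hs3 := ss_ge hR k
  have h1 := near H C Y k hinv t ht
  have h2 := zz_bound H Y ht.1 ht.2
  have h3 : Real.exp (-ss R k) ≤ 1 := Real.exp_le_one_iff.2 (by linarith)
  have h4 := norm_le_insert' (y t) (zz c j R Z mu k t)
  have h5 : 1 ≤ (R + t) ^ bb c := one_le_pow₀ (by linarith [ht.1])
  rw [pow_succ]
  nlinarith [ht.1]

theorem step_y (H : Dat c R p Qf Z pr fx) (C : Cons c l j) (Y : Sol c l j R p Qf pr y mu out) (k : ℕ)
    (hinv : ‖y (TT k + Real.pi / 3)‖ ≤ ss R k ^ (bb c + 1)) :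
    ∀ t ∈ Icc (TT k + Real.pi / 3) (TT k + 7 * Real.pi / 3), ‖y t‖ ≤ (R + t) ^ aa c := by
  intro t ht
  have hR := H.R2
  have hc := H.c1
  have hT := TT_nonneg k; have hpi := Real.pi_gt_three
  have hpi2 := Real.pi_lt_d2
  have hs3 := ss_ge hR k
  have hS : 2 ≤ R + t := by linarith [ht.1]
  rcases le_total (TT k + Real.pi) t with h | h
  · exact (step_late H C Y k hinv t ⟨h, ht.2⟩).trans (pow_le_pow_right₀ (by linarith) (by unfold aa; omega))
  set s := ss R k with hsd
  obtain ⟨e1, -, -, e4⟩ := err_num C hs3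
  have hk0 : 0 ≤ kap l j s := kap_nonneg (by linarith)
  have hE1 : Real.exp (-s) ≤ 1 := Real.exp_le_one_iff.2 (by linarith)
  have hr := relax (β := pB l j R) pB_cont (u := y) (g := fun s => Qf (mu s))
    (e := fun s => pA c j R s • p (cl ((R + |s|) ^ aa c) (y s))) (c := 0) (t0 := TT k + Real.pi / 3) (t1 := t)
    (η := (R + t) ^ c) (ε := 1 / 32) (fun s _ => Y.hy s)
    (fun u hu => pulse_nonneg hR _ _ _ (by linarith [hu.1]))
    (fun u hu => by
      have hmb := mu_bounds hR Y (t := u) (by linarith [hu.1])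
      rw [sub_zero]
      exact H.H3 _ (by linarith [ht.1]) _ hmb.1 (by linarith [hu.2]))
    (fun u hu => by
      have hu0 : 0 ≤ u := by linarith [hu.1]
      have hn : 0 ≤ pA c j R u := pulse_nonneg hR _ _ _ hu0
      rw [norm_smul, Real.norm_eq_abs, abs_of_nonneg hn, abs_of_nonneg hu0]
      have h1 := (H.clb (S := R + u) (by linarith [hu.1]) (y u)).trans
        (ss_pow hR (k := k) hu0 (N := NN c) (by linarith [hu.2]) (by unfold NN; omega))
      have h2 : pA c j R u ≤ kap l j s := pA_off1 hR C hu.1 (by linarith [hu.2])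
      calc _ ≤ kap l j s * s ^ NN c := by gcongr
        _ ≤ _ := by linarith) t ⟨ht.1, le_rfl⟩
  rw [sub_zero, sub_zero] at hr
  have hI : 0 ≤ ∫ u in (TT k + Real.pi / 3)..t, pB l j R u :=
    intervalIntegral.integral_nonneg ht.1 fun u hu => pulse_nonneg hR _ _ _ (by linarith [hu.1])
  have hE : Real.exp (-∫ u in (TT k + Real.pi / 3)..t, pB l j R u) ≤ 1 := Real.exp_le_one_iff.2 (by linarith)
  have hE0 := Real.exp_pos (-∫ u in (TT k + Real.pi / 3)..t, pB l j R u)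
  set X := Real.exp (-∫ u in (TT k + Real.pi / 3)..t, pB l j R u)
  have h7 : (R + t) ^ (bb c + 1) + (R + t) ^ c + 1 ≤ (R + t) ^ aa c :=
    pow_two_sum (by linarith) (by unfold bb; nlinarith) (by unfold aa; omega)
  have h8 : s ^ (bb c + 1) ≤ (R + t) ^ (bb c + 1) :=
    pow_le_pow_left₀ (by linarith) (by rw [hsd]; unfold ss; linarith [ht.1]) _
  have h9 : 0 ≤ (R + t) ^ c := by positivity
  have h10 : X * ‖y (TT k + Real.pi / 3)‖ ≤ ‖y (TT k + Real.pi / 3)‖ :=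
    mul_le_of_le_one_left (norm_nonneg _) hE
  have h11 : (1 - X) * (R + t) ^ c ≤ (R + t) ^ c := mul_le_of_le_one_left h9 (by linarith)
  linarith

theorem step_mu (H : Dat c R p Qf Z pr fx) (C : Cons c l j) (Y : Sol c l j R p Qf pr y mu out) (k : ℕ) :
    TT (k + 1) - 3 ≤ mu (TT (k + 1) + Real.pi / 3) := by
  have hR := H.R2
  have hT := TT_nonneg k; have hpi := Real.pi_gt_three
  have hpi2 := Real.pi_lt_d2
  have hs3 := ss_ge hR k
  rw [← t3_eq, TT_succ]
  have hr := relax (β := pG l j R) pG_cont (u := mu) (g := id) (e := fun _ => 0) (c := TT k + 2 * Real.pi)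
    (t0 := TT k + 5 * Real.pi / 3) (t1 := TT k + 7 * Real.pi / 3)
    (η := Real.pi / 3) (ε := 0) (fun s _ => by simpa using Y.hm s)
    (fun u hu => pulse_nonneg hR _ _ _ (by linarith [hu.1]))
    (fun u hu => by
      rw [Real.norm_eq_abs, abs_le]; simp only [id]
      exact ⟨by linarith [hu.1], by linarith [hu.2]⟩) (fun _ _ => by simp)
    (TT k + 7 * Real.pi / 3) ⟨by linarith, le_rfl⟩
  set s := ss R k with hsd
  obtain ⟨-, -, e3, -⟩ := err_num C hs3
  have hG := int_G (l := l) (j := j) hR k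
  rw [Real.norm_eq_abs, Real.norm_eq_abs] at hr
  set X := Real.exp (-∫ u in (TT k + 5 * Real.pi / 3)..(TT k + 7 * Real.pi / 3), pG l j R u) with hX
  have hX1 : X ≤ Real.exp (-(s ^ l / 2)) := Real.exp_le_exp.2 (by linarith)
  have hX0 : 0 < X := Real.exp_pos _
  have hE1 : Real.exp (-s) ≤ 1 := Real.exp_le_one_iff.2 (by linarith)
  have hb := mu_bounds hR Y (t := TT k + 5 * Real.pi / 3) (by linarith)
  have hd : |mu (TT k + 5 * Real.pi / 3) - (TT k + 2 * Real.pi)| ≤ s ^ NN c := by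
    have := ss_pow hR (k := k) (t := TT k + 2 * Real.pi) (e := 1) (N := NN c) (by linarith) (by linarith)
      (by unfold NN; omega)
    rw [pow_one] at this
    rw [abs_le]; constructor <;> linarith [hb.1, hb.2]
  have h1 : X * |mu (TT k + 5 * Real.pi / 3) - (TT k + 2 * Real.pi)| ≤ 1 := by
    calc _ ≤ Real.exp (-(s ^ l / 2)) * s ^ NN c := by gcongr
      _ ≤ 1 := by linarith
  have h2 := (abs_le.1 (hr.trans (b := _) le_rfl)).1
  nlinarith

theorem inv_all (H : Dat c R p Qf Z pr fx) (C : Cons c l j) (Y : Sol c l j R p Qf pr y mu out) (k : ℕ) :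
    ‖y (TT k + Real.pi / 3)‖ ≤ ss R k ^ (bb c + 1) ∧ TT k - 3 ≤ mu (TT k + Real.pi / 3) := by
  have hpi := Real.pi_gt_three
  induction k with
  | zero =>
    have h0 : TT 0 = 0 := by simp [TT]
    constructor
    · have := pre H C Y (t := Real.pi / 3) (by linarith) le_rfl
      simpa [h0, ss] using this
    · rw [h0, zero_add]
      linarith [(mu_bounds H.R2 Y (t := Real.pi / 3) (by linarith)).1]
  | succ k ih =>
    refine ⟨?_, step_mu H C Y k⟩
    have := step_late H C Y k ih.1 (TT k + 7 * Real.pi / 3) ⟨by linarith, le_rfl⟩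
    rw [t3_eq] at this
    exact this

theorem find_cycle {t : ℝ} (ht : Real.pi / 3 ≤ t) :
    ∃ k : ℕ, t ∈ Icc (TT k + Real.pi / 3) (TT k + 7 * Real.pi / 3) := by
  have hpi := Real.pi_pos
  refine ⟨⌊(t - Real.pi / 3) / (2 * Real.pi)⌋₊, ?_, ?_⟩
  · have := Nat.floor_le (a := (t - Real.pi / 3) / (2 * Real.pi)) (div_nonneg (by linarith) (by linarith))
    rw [le_div_iff₀ (by linarith)] at this
    unfold TT; linarith
  · have := Nat.lt_floor_add_one ((t - Real.pi / 3) / (2 * Real.pi))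
    rw [div_lt_iff₀ (by linarith)] at this
    unfold TT; linarith

theorem y_bound (H : Dat c R p Qf Z pr fx) (C : Cons c l j) (Y : Sol c l j R p Qf pr y mu out) {t : ℝ}
    (ht : 0 ≤ t) : ‖y t‖ ≤ (R + t) ^ aa c := by
  have hR := H.R2
  rcases le_total t (Real.pi / 3) with h | h
  · exact (pre H C Y ht h).trans (pow_le_pow_right₀ (by linarith) (by unfold aa; omega))
  · obtain ⟨k, hk⟩ := find_cycle h
    exact step_y H C Y k (inv_all H C Y k).1 t hk

theorem out_bound (H : Dat c R p Qf Z pr fx) (C : Cons c l j) (Y : Sol c l j R p Qf pr y mu out) {t : ℝ}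
    (ht : 0 ≤ t) : ‖out t‖ ≤ (R + t) ^ aa c := by
  have hR := H.R2
  have hr := relax (β := pG l j R) pG_cont (u := out) (g := fun s => pr (y s)) (e := fun _ => 0) (c := 0)
    (t0 := 0) (t1 := t) (η := (R + t) ^ aa c) (ε := 0) (fun s _ => by simpa using Y.ho s)
    (fun u hu => pulse_nonneg hR _ _ _ hu.1)
    (fun u hu => by
      rw [sub_zero]
      refine (H.P2 _).trans ((y_bound H C Y hu.1).trans (pow_le_pow_left₀ ?_ ?_ _))
      · linarith [hu.1]
      · linarith [hu.2]) (fun _ _ => by simp) t ⟨ht, le_rfl⟩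
  rw [Y.o0, sub_zero, sub_zero, norm_zero] at hr
  have hE0 := Real.exp_pos (-∫ u in (0:ℝ)..t, pG l j R u)
  have : 0 ≤ (R + t) ^ aa c := by positivity
  nlinarith

theorem trans_err (H : Dat c R p Qf Z pr fx) (C : Cons c l j) (Y : Sol c l j R p Qf pr y mu out) (k : ℕ) :
    ∀ t ∈ Icc (TT k + 5 * Real.pi / 3) (TT k + 7 * Real.pi / 3),
      ‖pr (y t) - fx‖ ≤ 2 * Real.exp (-(TT k - 3)) := by
  intro t ht
  have hR := H.R2
  have hT := TT_nonneg k; have hpi := Real.pi_gt_three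
  obtain ⟨i1, i2⟩ := inv_all H C Y k
  have h1 := near H C Y k i1 t ⟨by linarith [ht.1], ht.2⟩
  have hm1 : mu (TT k + Real.pi / 3) ≤ mu (TT k + Real.pi) :=
    mu_mono hR Y (by simp only [mem_Ici]; linarith) (by simp only [mem_Ici]; linarith) (by linarith)
  have hb := mu_bounds hR Y (t := TT k + Real.pi) (by linarith)
  have h2 := H.H7 (R + (TT k + Real.pi)) (by linarith) _ _ hb.1 (by linarith) (int_A (j := j) hR k ht.1)
  have h3 := (H.P1 (y t) (zz c j R Z mu k t)).trans h1
  have h4 : Real.exp (-mu (TT k + Real.pi)) ≤ Real.exp (-(TT k - 3)) := Real.exp_le_exp.2 (by linarith)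
  have h5 : Real.exp (-ss R k) ≤ Real.exp (-(TT k - 3)) := Real.exp_le_exp.2 (by unfold ss; linarith)
  have h6 := norm_sub_le_norm_sub_add_norm_sub (pr (y t)) (pr (zz c j R Z mu k t)) fx
  have h7 : ‖pr (zz c j R Z mu k t) - fx‖ ≤ Real.exp (-mu (TT k + Real.pi)) := h2
  linarith

theorem fx_bound (H : Dat c R p Qf Z pr fx) {S : ℝ} (hS : R ≤ S) : ‖fx‖ ≤ S ^ aa c := by
  have hR := H.R2
  have hc := H.c1
  have h0 : R ≤ R ^ c := le_self_pow₀ (by linarith) (by omega)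
  have h1 := H.H7 R le_rfl 0 (R ^ c) le_rfl (by linarith) le_rfl
  have h2 := H.H5 (R ^ c) h0 0 (R ^ c) le_rfl (by positivity) (by positivity) le_rfl
  have h3 := (H.P2 _).trans h2
  rw [← pow_mul] at h3
  have h4 := norm_le_insert (pr (Z 0 (R ^ c))) fx
  have h5 : R ^ (c * c) + R ^ (c * c) + 1 ≤ R ^ aa c := pow_two_sum hR le_rfl (by unfold aa bb; nlinarith)
  have h6 : R ^ aa c ≤ S ^ aa c := pow_le_pow_left₀ (by linarith) hS _
  have h7 : 0 ≤ R ^ (c * c) := by positivity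
  simp only [neg_zero, Real.exp_zero] at h1
  linarith

/-- output error during the idle part of a cycle -/
theorem out_idle (H : Dat c R p Qf Z pr fx) (C : Cons c l j) (Y : Sol c l j R p Qf pr y mu out) (k : ℕ) :
    ∀ t ∈ Icc (TT k + Real.pi / 3) (TT k + 5 * Real.pi / 3),
      ‖out t - fx‖ ≤ ‖out (TT k + Real.pi / 3) - fx‖ + Real.exp (-(TT k - 3)) := by
  intro t ht
  have hR := H.R2
  have hT := TT_nonneg k; have hpi := Real.pi_gt_three
  have hpi2 := Real.pi_lt_d2
  have hs3 := ss_ge hR k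
  set s := ss R k with hsd
  have hr := relax (β := pG l j R) pG_cont (u := out) (g := fun s => pr (y s)) (e := fun _ => 0) (c := fx)
    (t0 := TT k + Real.pi / 3) (t1 := t) (η := 2 * s ^ NN c) (ε := 0) (fun s _ => by simpa using Y.ho s)
    (fun u hu => pulse_nonneg hR _ _ _ (by linarith [hu.1]))
    (fun u hu => by
      have hu0 : 0 ≤ u := by linarith [hu.1]
      have h1 := (H.P2 _).trans (y_bound H C Y hu0)
      have h2 := fx_bound H (S := R + u) (by linarith)
      have h3 := ss_pow hR (k := k) (t := u) (e := aa c) (N := NN c) hu0 (by linarith [ht.2, hu.2])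
        (by unfold NN; omega)
      have h4 := norm_sub_le (pr (y u)) fx
      linarith) (fun _ _ => by simp) t ⟨ht.1, le_rfl⟩
  obtain ⟨-, -, -, e4⟩ := err_num C hs3
  have hk0 : 0 ≤ kap l j s := kap_nonneg (by linarith)
  have hI : ∫ u in (TT k + Real.pi / 3)..t, pG l j R u ≤ 5 * kap l j s := by
    calc _ ≤ ∫ u in (TT k + Real.pi / 3)..t, kap l j s := by
          refine intervalIntegral.integral_mono_on ht.1 (pG_cont.intervalIntegrable _ _) (by simp) fun u hu => ?_
          exact pG_off hR hu.1 (hu.2.trans ht.2)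
      _ = (t - (TT k + Real.pi / 3)) * kap l j s := by simp
      _ ≤ _ := by gcongr; linarith [ht.2]
  have hI0 : 0 ≤ ∫ u in (TT k + Real.pi / 3)..t, pG l j R u :=
    intervalIntegral.integral_nonneg ht.1 fun u hu => pulse_nonneg hR _ _ _ (by linarith [hu.1])
  have h5 := Real.add_one_le_exp (-∫ u in (TT k + Real.pi / 3)..t, pG l j R u)
  have h6 : Real.exp (-∫ u in (TT k + Real.pi / 3)..t, pG l j R u) ≤ 1 := Real.exp_le_one_iff.2 (by linarith)
  set X := Real.exp (-∫ u in (TT k + Real.pi / 3)..t, pG l j R u)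
  have h7 : (1 - X) * (2 * s ^ NN c) ≤ 5 * kap l j s * (2 * s ^ NN c) := by gcongr; linarith
  have h8 : X * ‖out (TT k + Real.pi / 3) - fx‖ ≤ ‖out (TT k + Real.pi / 3) - fx‖ :=
    mul_le_of_le_one_left (norm_nonneg _) h6
  have h9 : Real.exp (-s) ≤ Real.exp (-(TT k - 3)) := Real.exp_le_exp.2 (by rw [hsd]; unfold ss; linarith)
  have h10 := Real.exp_pos (-s)
  nlinarith

theorem out_trans (H : Dat c R p Qf Z pr fx) (C : Cons c l j) (Y : Sol c l j R p Qf pr y mu out) (k : ℕ) :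
    (∀ t ∈ Icc (TT k + 5 * Real.pi / 3) (TT k + 7 * Real.pi / 3),
      ‖out t - fx‖ ≤ ‖out (TT k + 5 * Real.pi / 3) - fx‖ + 2 * Real.exp (-(TT k - 3))) ∧
    ‖out (TT k + 7 * Real.pi / 3) - fx‖ ≤ 3 * Real.exp (-(TT k - 3)) := by
  have hR := H.R2
  have hT := TT_nonneg k; have hpi := Real.pi_gt_three
  have hs3 := ss_ge hR k
  set s := ss R k with hsd
  have hr := relax (β := pG l j R) pG_cont (u := out) (g := fun s => pr (y s)) (e := fun _ => 0) (c := fx)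
    (t0 := TT k + 5 * Real.pi / 3) (t1 := TT k + 7 * Real.pi / 3) (η := 2 * Real.exp (-(TT k - 3))) (ε := 0)
    (fun s _ => by simpa using Y.ho s)
    (fun u hu => pulse_nonneg hR _ _ _ (by linarith [hu.1])) (trans_err H C Y k) (fun _ _ => by simp)
  have hE := Real.exp_pos (-(TT k - 3))
  constructor
  · intro t ht
    have h1 := hr t ht
    have hI0 : 0 ≤ ∫ u in (TT k + 5 * Real.pi / 3)..t, pG l j R u :=
      intervalIntegral.integral_nonneg ht.1 fun u hu => pulse_nonneg hR _ _ _ (by linarith [hu.1])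
    have h6 : Real.exp (-∫ u in (TT k + 5 * Real.pi / 3)..t, pG l j R u) ≤ 1 := Real.exp_le_one_iff.2 (by linarith)
    have h7 := Real.exp_pos (-∫ u in (TT k + 5 * Real.pi / 3)..t, pG l j R u)
    have h8 := mul_le_of_le_one_left (norm_nonneg (out (TT k + 5 * Real.pi / 3) - fx)) h6
    nlinarith
  · have h1 := hr (TT k + 7 * Real.pi / 3) ⟨by linarith, le_rfl⟩
    have hG := int_G (l := l) (j := j) hR k
    obtain ⟨-, -, e3, -⟩ := err_num C hs3
    have h6 : Real.exp (-∫ u in (TT k + 5 * Real.pi / 3)..(TT k + 7 * Real.pi / 3), pG l j R u)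
        ≤ Real.exp (-(s ^ l / 2)) := Real.exp_le_exp.2 (by linarith)
    have h7 := Real.exp_pos (-∫ u in (TT k + 5 * Real.pi / 3)..(TT k + 7 * Real.pi / 3), pG l j R u)
    set X := Real.exp (-∫ u in (TT k + 5 * Real.pi / 3)..(TT k + 7 * Real.pi / 3), pG l j R u)
    have h9 : Real.exp (-s) ≤ Real.exp (-(TT k - 3)) := Real.exp_le_exp.2 (by rw [hsd]; unfold ss; linarith)
    have h10 : ‖out (TT k + 5 * Real.pi / 3) - fx‖ ≤ 2 * s ^ NN c := by
      have k1 := out_bound H C Y (t := TT k + 5 * Real.pi / 3) (by linarith)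
      have k2 := fx_bound H (S := R + (TT k + 5 * Real.pi / 3)) (by linarith)
      have k3 := ss_pow hR (k := k) (t := TT k + 5 * Real.pi / 3) (e := aa c) (N := NN c) (by linarith)
        (by linarith) (by unfold NN; omega)
      have k4 := norm_sub_le (out (TT k + 5 * Real.pi / 3)) fx
      linarith
    have h11 : X * ‖out (TT k + 5 * Real.pi / 3) - fx‖ ≤ Real.exp (-(s ^ l / 2)) * (2 * s ^ NN c) := by gcongr
    have h12 := Real.exp_pos (-s)
    nlinarith

theorem out_conv (H : Dat c R p Qf Z pr fx) (C : Cons c l j) (Y : Sol c l j R p Qf pr y mu out) {t μ : ℝ}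
    (hμ : 0 ≤ μ) (ht : μ + 21 ≤ t) : ‖out t - fx‖ ≤ Real.exp (-μ) := by
  have hpi := Real.pi_gt_three
  have hpi2 := Real.pi_lt_d2
  obtain ⟨k, hk⟩ := find_cycle (t := t) (by linarith)
  have hk0 : k ≠ 0 := by
    rintro rfl
    have := hk.2
    simp only [TT, Nat.cast_zero, zero_mul, zero_add] at this
    linarith
  obtain ⟨k, rfl⟩ := Nat.exists_eq_succ_of_ne_zero hk0
  rw [Nat.succ_eq_add_one] at hk
  have h1 := (out_trans H C Y k).2
  rw [t3_eq] at h1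
  have hE : Real.exp (-(TT (k + 1) - 3)) ≤ Real.exp (-(TT k - 3)) / 8 := by
    have : Real.exp (-(TT (k + 1) - 3)) ≤ Real.exp (-(TT k - 3) + (-3)) :=
      Real.exp_le_exp.2 (by rw [TT_succ]; linarith)
    rw [Real.exp_add] at this
    have h8 : Real.exp (-3) ≤ 1 / 8 := by
      rw [Real.exp_neg, one_div]
      refine inv_anti₀ (by norm_num) ?_
      have := pow_le_pow_left₀ (by norm_num) (show (2:ℝ) ≤ Real.exp 1 by linarith [Real.add_one_le_exp 1]) 3
      rw [← Real.exp_nat_mul] at this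
      norm_num at this; exact this
    nlinarith [Real.exp_pos (-(TT k - 3))]
  have h0 := Real.exp_pos (-(TT k - 3))
  have hall : ‖out t - fx‖ ≤ 4 * Real.exp (-(TT k - 3)) := by
    rcases le_total t (TT (k + 1) + 5 * Real.pi / 3) with h | h
    · have := out_idle H C Y (k + 1) t ⟨hk.1, h⟩
      linarith
    · have h2 := out_idle H C Y (k + 1) (TT (k + 1) + 5 * Real.pi / 3) ⟨by linarith, le_rfl⟩
      have h3 := (out_trans H C Y (k + 1)).1 t ⟨h, hk.2⟩
      linarith
  have h4 : (4:ℝ) ≤ Real.exp 3 := by linarith [Real.add_one_le_exp 3]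
  calc ‖out t - fx‖ ≤ 4 * Real.exp (-(TT k - 3)) := hall
    _ ≤ Real.exp 3 * Real.exp (-(TT k - 3)) := by gcongr
    _ = Real.exp (6 - TT k) := by rw [← Real.exp_add]; ring_nf
    _ ≤ _ := by
      refine Real.exp_le_exp.2 ?_
      have := hk.2
      rw [TT_succ] at this
      linarith
end

end

section

theorem chi_deriv (R : ℝ) (j : ℕ) (φ t : ℝ) :
    HasDerivAt (chi R j φ) (((j * (R + t) ^ (j - 1) * t + (R + t) ^ j) * (Real.cos (t - φ) - 3 / 4)
      - (R + t) ^ j * t * Real.sin (t - φ)) * chi R j φ t * (1 - chi R j φ t)) t := by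
  have h1 : HasDerivAt (fun t : ℝ => (R + t) ^ j) (j * (R + t) ^ (j - 1)) t := by
    have h0 := ((hasDerivAt_id t).const_add R).pow j
    refine h0.congr_deriv ?_
    simp
  have h2 : HasDerivAt (fun t : ℝ => Real.cos (t - φ) - 3 / 4) (-Real.sin (t - φ)) t := by
    have := ((hasDerivAt_id t).sub_const φ).cos
    simpa using this.sub_const (3/4)
  have h3 := ((h1.mul (hasDerivAt_id t)).mul h2).neg.exp.const_add 1
  have hpos : (1 + Real.exp (-((R + t) ^ j * t * (Real.cos (t - φ) - 3 / 4)))) ≠ 0 := by positivity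
  have h4 := h3.inv hpos
  have : chi R j φ = fun t => (1 + Real.exp (-((R + t) ^ j * t * (Real.cos (t - φ) - 3 / 4))))⁻¹ := by
    ext t; simp [chi]
  rw [this]
  refine h4.congr_deriv ?_
  simp only [Pi.mul_apply, Pi.neg_apply, id]
  field_simp
  ring

abbrev Idx (m d n : ℕ) := Fin m ⊕ (Fin d ⊕ (Fin n ⊕ Fin 8))

section
open MvPolynomial
variable {m d n : ℕ}

def vV (k : Fin 8) : MvPolynomial (Idx m d n) ℝ := X (Sum.inr (Sum.inr (Sum.inr k)))

def dchiP (j : ℕ) (φ : ℝ) (k : Fin 8) : MvPolynomial (Idx m d n) ℝ :=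
  ((C (j : ℝ) * vV 2 ^ (j - 1) * vV 1 + vV 2 ^ j) *
      ((vV 4 * C (Real.cos φ) + vV 3 * C (Real.sin φ)) - C (3 / 4))
    - vV 2 ^ j * vV 1 * (vV 3 * C (Real.cos φ) - vV 4 * C (Real.sin φ))) * vV k * (1 - vV k)

def pulP (e : ℕ) (k : Fin 8) : MvPolynomial (Idx m d n) ℝ := vV 1 * vV 2 ^ e * vV k

def bigP (hd : m ≤ d) (p : Fin d → MvPolynomial (Fin d) ℝ) (q : Fin d → MvPolynomial (Fin (n + 1)) ℝ)
    (c l j : ℕ) : Idx m d n → MvPolynomial (Idx m d n) ℝ :=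
  Sum.elim (fun i => pulP l 7 * (X (Sum.inr (Sum.inl (Fin.castLE hd i))) - X (Sum.inl i)))
    (Sum.elim (fun i => pulP (c + 1) 5 * rename (fun a => Sum.inr (Sum.inl a)) (p i) +
        pulP l 6 * (rename (Fin.snoc (α := fun _ => Idx m d n) (fun a => Sum.inr (Sum.inr (Sum.inl a)))
          (Sum.inr (Sum.inr (Sum.inr 0)))) (q i) - X (Sum.inr (Sum.inl i))))
      (Sum.elim (fun _ => 0)
        ![pulP l 7 * (vV 1 - vV 0), 1, 1, vV 4, - vV 3, dchiP j (4 * Real.pi / 3) 5,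
          dchiP j (2 * Real.pi / 3) 6, dchiP j 0 7]))

def bigQ (q : Fin d → MvPolynomial (Fin (n + 1)) ℝ) : Idx m d n → MvPolynomial (Fin n) ℝ :=
  Sum.elim (fun _ => 0)
    (Sum.elim (fun i => bind₁ (Fin.snoc (α := fun _ => MvPolynomial (Fin n) ℝ) X 0) (q i))
      (Sum.elim X ![0, 0, C 2 + ∑ i, X i ^ 2, 0, 1, C (1 / 2), C (1 / 2), C (1 / 2)]))

def bigS (x : Fin n → ℝ) (j : ℕ) (R : ℝ) (y : ℝ → Fin d → ℝ) (mu : ℝ → ℝ) (out : ℝ → Fin m → ℝ)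
    (t : ℝ) : Idx m d n → ℝ :=
  Sum.elim (out t) (Sum.elim (y t) (Sum.elim x
    ![mu t, t, R + t, Real.sin t, Real.cos t, chi R j (4 * Real.pi / 3) t,
      chi R j (2 * Real.pi / 3) t, chi R j 0 t]))

theorem bigS_zero {x : Fin n → ℝ} {c l j : ℕ} {R : ℝ} {pp : (Fin d → ℝ) → Fin d → ℝ} {Qf : ℝ → Fin d → ℝ}
    {pr : (Fin d → ℝ) → Fin m → ℝ}
    {y : ℝ → Fin d → ℝ} {mu : ℝ → ℝ} {out : ℝ → Fin m → ℝ} (Y : Sol c l j R pp Qf pr y mu out)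
    (q : Fin d → MvPolynomial (Fin (n + 1)) ℝ) (hQ : Qf = fun μ => gEval q (Fin.snoc x μ))
    (hR : R = 2 + ∑ i, x i ^ 2) : bigS x j R y mu out 0 = gEval (bigQ q) x := by
  ext i
  rcases i with i | i | i | i
  · simp [bigS, gEval, bigQ, Y.o0]
  · simp only [bigS, gEval, bigQ, Sum.elim_inr, Sum.elim_inl, Y.y0, hQ]
    have e1 : (Fin.snoc x 0 : Fin (n+1) → ℝ) = fun k => aeval x
        ((Fin.snoc (α := fun _ => MvPolynomial (Fin n) ℝ) X 0 : Fin (n+1) → _) k) := by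
      ext k
      refine Fin.lastCases ?_ (fun k => ?_) k <;> simp
    rw [e1, ← aeval_eq_eval, ← aeval_eq_eval]
    exact (aeval_bind₁ _ _ _).symm
  · simp [bigS, gEval, bigQ]
  · fin_cases i <;> simp [bigS, gEval, bigQ, Y.m0, hR, chi_zero]

theorem bigS_deriv {x : Fin n → ℝ} {c l j : ℕ} {R : ℝ} (hd : m ≤ d) {Qf : ℝ → Fin d → ℝ}
    (p : Fin d → MvPolynomial (Fin d) ℝ)
    {y : ℝ → Fin d → ℝ} {mu : ℝ → ℝ} {out : ℝ → Fin m → ℝ}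
    (Y : Sol c l j R (gEval p) Qf (fun v i => v (Fin.castLE hd i)) y mu out)
    (q : Fin d → MvPolynomial (Fin (n + 1)) ℝ) (hQ : Qf = fun μ => gEval q (Fin.snoc x μ))
    {t : ℝ} (ht : 0 ≤ t) (hb : ‖y t‖ ≤ (R + t) ^ aa c) :
    HasDerivAt (bigS x j R y mu out) (gEval (bigP hd p q c l j) (bigS x j R y mu out t)) t := by
  have hchi : ∀ φ k, bigS x j R y mu out t (Sum.inr (Sum.inr (Sum.inr k))) = chi R j φ t →
      HasDerivAt (chi R j φ) (eval (bigS x j R y mu out t) (dchiP j φ k)) t := by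
    intro φ k hk
    refine (chi_deriv R j φ t).congr_deriv ?_
    simp only [dchiP, vV, map_mul, map_add, map_sub, map_pow, eval_X, eval_C, map_one, hk]
    simp only [bigS, Sum.elim_inr, Real.cos_sub, Real.sin_sub]
    simp
  refine hasDerivAt_pi.2 fun i => ?_
  rcases i with i | i | i | i
  · refine (hasDerivAt_pi.1 (Y.ho t) i).congr_deriv ?_
    simp [bigS, gEval, bigP, pulP, vV, pG, pulse]
  · have h := hasDerivAt_pi.1 (Y.hy t) i
    rw [abs_of_nonneg ht, cl_eq hb] at h
    refine h.congr_deriv ?_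
    have e1 : (Fin.snoc x (mu t) : Fin (n+1) → ℝ) = bigS x j R y mu out t ∘ (Fin.snoc (α := fun _ => Idx m d n) (fun a => Sum.inr (Sum.inr (Sum.inl a)))
          (Sum.inr (Sum.inr (Sum.inr 0)))) := by
      ext k
      refine Fin.lastCases ?_ (fun k => ?_) k <;> simp [bigS]
    have e2 : y t = bigS x j R y mu out t ∘ (fun a => Sum.inr (Sum.inl a)) := by
      ext k; simp [bigS]
    simp only [gEval, bigP, Sum.elim_inr, Sum.elim_inl, map_add, map_mul, map_sub, eval_rename, ← e1, ← e2, hQ]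
    simp [bigS, pulP, vV, pA, pB, pulse, gEval]
  · simpa [bigS, gEval, bigP] using hasDerivAt_const t (x i)
  · have hid := hasDerivAt_id t
    fin_cases i
    · refine (Y.hm t).congr_deriv ?_
      simp [bigS, gEval, bigP, pulP, vV, pG, pulse]
    · simpa [bigS, gEval, bigP] using hasDerivAt_id' t
    · simpa [bigS, gEval, bigP] using hid.const_add R
    · simpa [bigS, gEval, bigP, vV] using Real.hasDerivAt_sin t
    · simpa [bigS, gEval, bigP, vV] using Real.hasDerivAt_cos t
    · exact hchi _ _ (by simp [bigS])
    · exact hchi _ _ (by simp [bigS])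
    · exact hchi _ _ (by simp [bigS])

theorem bigS_norm {x : Fin n → ℝ} {j N : ℕ} {R : ℝ} (hR : 2 ≤ R) (hx : ‖x‖ ≤ R) (hN : 1 ≤ N)
    {y : ℝ → Fin d → ℝ} {mu : ℝ → ℝ} {out : ℝ → Fin m → ℝ}
    {t : ℝ} (ht : 0 ≤ t) (hb : ‖y t‖ ≤ (R + t) ^ N) (ho : ‖out t‖ ≤ (R + t) ^ N)
    (hm0 : 0 ≤ mu t) (hm : mu t ≤ t) : ‖bigS x j R y mu out t‖ ≤ (R + t) ^ N := by
  have hS : R + t ≤ (R + t) ^ N := le_self_pow₀ (by linarith) (by omega)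
  refine (pi_norm_le_iff_of_nonneg (by positivity)).2 fun i => ?_
  have hchi : ∀ φ, |chi R j φ t| ≤ (R + t) ^ N := fun φ => by
    rw [abs_of_pos (chi_pos _ _ _ _)]; linarith [chi_le_one R j φ t]
  rcases i with i | i | i | i
  · exact (norm_le_pi_norm (out t) i).trans ho
  · exact (norm_le_pi_norm (y t) i).trans hb
  · exact (norm_le_pi_norm x i).trans (by linarith)
  · rw [Real.norm_eq_abs]
    fin_cases i
    · simp only [bigS, Sum.elim_inr]; simp; rw [abs_of_nonneg hm0]; linarith
    · simp only [bigS, Sum.elim_inr]; simp; rw [abs_of_nonneg ht]; linarith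
    · simp only [bigS, Sum.elim_inr]; simp; rw [abs_of_nonneg (by linarith)]; linarith
    · exact (Real.abs_sin_le_one t).trans (by linarith)
    · exact (Real.abs_cos_le_one t).trans (by linarith)
    · exact hchi _
    · exact hchi _
    · exact hchi _

end

theorem dat_exist {n m d : ℕ} {dom : Set (Fin n → ℝ)} {f : (Fin n → ℝ) → (Fin m → ℝ)}
    {Ω : ℝ → ℝ → ℝ} {Υ : ℝ → ℝ → ℝ → ℝ} (hΩ : IsPolyFun2 Ω) (hΥ : IsPolyFun3 Υ) (hd : m ≤ d)
    (p : Fin d → MvPolynomial (Fin d) ℝ) (q : Fin d → MvPolynomial (Fin (n + 1)) ℝ)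
    (H : ∀ x ∈ dom, ∀ μ : ℝ, 0 ≤ μ → ∃ y : ℝ → Fin d → ℝ,
      (y 0 = fun i => MvPolynomial.eval (Fin.snoc x μ) (q i)) ∧
      (∀ t : ℝ, 0 ≤ t → HasDerivAt y (pEval p (y t)) t) ∧
      (∀ t : ℝ, 0 ≤ t → Ω ‖x‖ μ ≤ t →
        ‖(fun i : Fin m => y t (Fin.castLE hd i)) - f x‖ ≤ Real.exp (-μ)) ∧
      (∀ t : ℝ, 0 ≤ t → ‖y t‖ ≤ Υ ‖x‖ μ t)) :
    ∃ c : ℕ, ∀ x ∈ dom, ∀ R : ℝ, 2 ≤ R → ‖x‖ ≤ R → ∃ Z,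
      Dat c R (gEval p) (fun μ => gEval q (Fin.snoc x μ)) Z (fun v (i : Fin m) => v (Fin.castLE hd i)) (f x) := by
  obtain ⟨a1, h1⟩ := poly_bound p
  obtain ⟨a2, h2⟩ := poly_lip p
  obtain ⟨a3, h3⟩ := poly_bound q
  obtain ⟨a4, h4⟩ := poly_lip q
  obtain ⟨a5, h5⟩ := polyFun2_bound hΩ
  obtain ⟨a6, h6⟩ := polyFun3_bound hΥ
  refine ⟨a1 + a2 + a3 + a4 + a5 + a6 + 1, fun x hx R hR hxR => ?_⟩
  set c := a1 + a2 + a3 + a4 + a5 + a6 + 1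
  choose Z hZ0 hZ1 hZ2 hZ3 using fun μ : ℝ => H x hx (max μ 0) (le_max_right _ _)
  have hsn : ∀ S, R ≤ S → ∀ μ, 0 ≤ μ → μ ≤ S → ‖(Fin.snoc x μ : Fin (n+1) → ℝ)‖ ≤ S := by
    intro S hS μ h0 hμ
    refine (pi_norm_le_iff_of_nonneg (by linarith)).2 fun i => ?_
    refine Fin.lastCases ?_ (fun k => ?_) i
    · simp [abs_of_nonneg h0, hμ]
    · simpa using (norm_le_pi_norm x k).trans (by linarith)
  have hsub : ∀ μ ν, ‖(Fin.snoc x μ : Fin (n+1) → ℝ) - Fin.snoc x ν‖ ≤ |μ - ν| := by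
    intro μ ν
    refine (pi_norm_le_iff_of_nonneg (by positivity)).2 fun i => ?_
    refine Fin.lastCases ?_ (fun k => ?_) i
    · simp
    · simp
  refine ⟨Z, ⟨by omega, hR, gEval_continuous p, ?_, by fun_prop, ?_, ?_, ?_, ?_, ?_, ?_, ?_, ?_, ?_, ?_⟩⟩
  · refine (gEval_continuous q).comp (continuous_pi fun i => ?_)
    refine Fin.lastCases ?_ (fun k => ?_) i
    · simpa using continuous_id'
    · simpa using continuous_const
  · exact fun S hS v hv => h1 c (by omega) S (hR.trans hS) v hv
  · exact fun S hS v w hv hw => h2 c (by omega) S (hR.trans hS) v w hv hw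
  · exact fun S hS μ h0 hμ => h3 c (by omega) S (hR.trans hS) _ (hsn S hS μ h0 hμ)
  · intro S hS μ ν h0 hμ h0' hν
    refine (h4 c (by omega) S (hR.trans hS) _ _ (hsn S hS μ h0 hμ) (hsn S hS ν h0' hν)).trans ?_
    have : 0 ≤ S := by linarith
    gcongr
    exact hsub μ ν
  · intro S hS μ τ h0 hμ hτ hτS
    refine (hZ3 μ τ hτ).trans ?_
    rw [max_eq_left h0]
    exact h6 c (by omega) S (hR.trans hS) _ _ _ (norm_nonneg _) h0 hτ (hxR.trans hS) hμ hτS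
  · intro μ h0
    have := hZ0 μ
    rw [max_eq_left h0] at this
    exact this
  · intro μ h0 τ hτ
    exact hZ1 μ τ hτ
  · intro S hS μ τ h0 hμ hτ
    have h := hZ2 μ τ (le_trans (pow_nonneg (by linarith) _) hτ)
    rw [max_eq_left h0] at h
    exact h ((h5 c (by omega) S (hR.trans hS) _ _ (norm_nonneg _) h0 (hxR.trans hS) hμ).trans hτ)
  · intro u v
    refine (pi_norm_le_iff_of_nonneg (by positivity)).2 fun i => ?_
    exact norm_le_pi_norm (u - v) _
  · intro u
    refine (pi_norm_le_iff_of_nonneg (by positivity)).2 fun i => ?_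
    exact norm_le_pi_norm u _

theorem R_bounds {n : ℕ} (x : Fin n → ℝ) : 2 ≤ 2 + ∑ i, x i ^ 2 ∧ ‖x‖ ≤ 2 + ∑ i, x i ^ 2 ∧
    2 + ∑ i, x i ^ 2 ≤ 2 + n * ‖x‖ ^ 2 := by
  have h0 : 0 ≤ ∑ i, x i ^ 2 := Finset.sum_nonneg fun i _ => sq_nonneg _
  refine ⟨by linarith, ?_, ?_⟩
  · refine (pi_norm_le_iff_of_nonneg (by linarith)).2 fun i => ?_
    have h1 : x i ^ 2 ≤ ∑ i, x i ^ 2 := Finset.single_le_sum (f := fun i => x i ^ 2)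
      (fun i _ => sq_nonneg _) (Finset.mem_univ i)
    rw [Real.norm_eq_abs]
    nlinarith [sq_abs (x i), sq_nonneg (|x i| - 1)]
  · have : ∑ i, x i ^ 2 ≤ ∑ _i : Fin n, ‖x‖ ^ 2 := Finset.sum_le_sum fun i _ => by
      rw [← sq_abs (x i)]
      have := norm_le_pi_norm x i
      rw [Real.norm_eq_abs] at this
      gcongr
    simpa using this

theorem AWP_imp_AP {n m : ℕ} (dom : Set (Fin n → ℝ)) (f : (Fin n → ℝ) → (Fin m → ℝ))
    (H : AWP dom f) : AP dom f := by
  obtain ⟨Ω, Υ, hΩ, hΥ, d, hd, p, q, H⟩ := H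
  obtain ⟨c, hc⟩ := dat_exist hΩ hΥ hd p q H
  obtain ⟨l, j, C⟩ := con_exist c
  obtain ⟨a, ha⟩ := poly_bound (bigP hd p q c l j : Idx m d n → _)
  set K := aa c * a + 1 with hK
  have haa : 1 ≤ aa c := by unfold aa; omega
  refine AP_of_sum le_rfl dom f (bigP hd p q c l j) (bigQ q) _
    (isPolyFun2_pow (23 + n) (by positivity) (3 * K + 1)) fun x hx => ?_
  obtain ⟨hR2, hxR, hRn⟩ := R_bounds x
  set R := 2 + ∑ i, x i ^ 2 with hR
  obtain ⟨Z, D⟩ := hc x hx R hR2 hxR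
  obtain ⟨y, mu, out, Y⟩ := sol_exist D l j
  have hder : ∀ t, 0 ≤ t → HasDerivAt (bigS x j R y mu out)
      (gEval (bigP hd p q c l j) (bigS x j R y mu out t)) t := fun t ht =>
    bigS_deriv hd p Y q rfl ht (y_bound D C Y ht)
  have hcont : ContinuousOn (fun s => ‖gEval (bigP hd p q c l j) (bigS x j R y mu out s)‖) (Set.Ici 0) :=
    ((gEval_continuous _).comp_continuousOn
      (fun t ht => (hder t ht).continuousAt.continuousWithinAt)).norm
  have hint : ∀ t, 0 ≤ t → IntervalIntegrable
      (fun s => ‖gEval (bigP hd p q c l j) (bigS x j R y mu out s)‖) MeasureTheory.volume 0 t := by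
    intro t ht
    refine (hcont.mono ?_).intervalIntegrable
    rw [Set.uIcc_of_le ht]; exact fun s hs => hs.1
  refine ⟨bigS x j R y mu out, bigS_zero Y q rfl rfl, hder, fun t ht μ hμ hle => ?_, fun t ht => ?_⟩
  · change ‖out t - f x‖ ≤ _
    refine out_conv D C Y hμ ?_
    by_contra hlt
    push Not at hlt
    have hub : ∀ s ∈ Set.Icc 0 t, ‖gEval (bigP hd p q c l j) (bigS x j R y mu out s)‖ ≤ (R + t) ^ (aa c * a) := by
      intro s hs
      have hS : R + s ≤ (R + s) ^ aa c := le_self_pow₀ (by linarith [hs.1]) (by omega)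
      have hmu := mu_bounds hR2 Y hs.1
      have h1 := ha a le_rfl ((R + s) ^ aa c) (by linarith [hs.1]) _
        (bigS_norm (j := j) hR2 hxR haa hs.1 (y_bound D C Y hs.1) (out_bound D C Y hs.1) hmu.1 hmu.2)
      rw [← pow_mul] at h1
      refine h1.trans (pow_le_pow_left₀ (by linarith [hs.1]) (by linarith [hs.2]) _)
    have hI : (∫ s in (0:ℝ)..t, ‖gEval (bigP hd p q c l j) (bigS x j R y mu out s)‖) ≤ (R + t) ^ K := by
      refine (intervalIntegral.integral_mono_on ht (hint t ht) (by simp) hub).trans ?_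
      rw [intervalIntegral.integral_const, smul_eq_mul, sub_zero, hK, pow_succ, mul_comm]
      gcongr
      linarith
    set B : ℝ := 23 + n + ‖x‖ + μ with hB
    have hx0 := norm_nonneg x
    have hn0 : (0:ℝ) ≤ n := Nat.cast_nonneg n
    have hB1 : 1 < B := by linarith
    have hRB : R + t ≤ B ^ 3 := by
      have e1 : n * ‖x‖ ^ 2 ≤ B * (B * B) - B * B := by
        have : (n:ℝ) * ‖x‖ ^ 2 ≤ (B - 1) * B ^ 2 := by
          gcongr <;> linarith
        linarith
      have e2 : B ≤ B * B := by nlinarith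
      have : B ^ 3 = B * (B * B) := by ring
      linarith
    have h5 : (R + t) ^ K ≤ (B ^ 3) ^ K := pow_le_pow_left₀ (by linarith) hRB _
    have h6 : (B ^ 3) ^ K < B ^ (3 * K + 1) := by
      rw [← pow_mul]; exact pow_lt_pow_right₀ hB1 (by omega)
    linarith
  · have := intervalIntegral.integral_mono_on (f := fun _ => (1:ℝ)) ht (by simp) (hint t ht) (fun s hs => ?_)
    · simpa using this
    · have := norm_le_pi_norm (gEval (bigP hd p q c l j) (bigS x j R y mu out s)) (Sum.inr (Sum.inr (Sum.inr 1)))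
      refine le_trans (le_of_eq ?_) this
      simp [gEval, bigP]

end

/-- **`AWP ⊆ AP`**: every partial function in `AWP` also belongs to `AP`;
consequently the two classes coincide: `AP = AWP`. -/
theorem awp_subset_ap {n m : ℕ} (dom : Set (Fin n → ℝ))
    (f : (Fin n → ℝ) → (Fin m → ℝ)) :
    (AWP dom f → AP dom f) ∧ (AP dom f ↔ AWP dom f) := by
  exact ⟨AWP_imp_AP dom f, AP_imp_AWP dom f, AWP_imp_AP dom f⟩
end
end
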